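/- The Mac Lane cohomology of F_2 with coefficients in the identity functor satisfies HML^k(F_2; I) ≅ F_2 for all even k ≥ 0 and HML^k(F_2; I) = 0 for all odd k. -/

import Mathlib

open CategoryTheory Limits

noncomputable section

/-- The category `F(𝔽₂)` of functors from finite-dimensional `𝔽₂`-vector spaces to
`𝔽₂`-vector spaces. -/
abbrev FunCatF2 : Type _ := FGModuleCat (ZMod 2) ⥤ ModuleCat (ZMod 2)

/-- The inclusion (identity) functor `I ∈ F(𝔽₂)`, `V ↦ V`. -/
def inclFunctor : FunCatF2 := forget₂ (FGModuleCat (ZMod 2)) (ModuleCat (ZMod 2))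

namespace MacLane
universe u
open CategoryTheory.Abelian

abbrev Fn := FunCatF2.{u, u}
abbrev FG := FGModuleCat.{u} (ZMod 2)

/-- Construct a functor from linear-algebraic data. -/
def mkFun (obj : FG.{u} → Type u) [∀ V, AddCommGroup (obj V)] [∀ V, Module (ZMod 2) (obj V)]
    (map : ∀ {V W : FG.{u}}, (V →ₗ[ZMod 2] W) → (obj V →ₗ[ZMod 2] obj W))
    (map_id : ∀ V : FG.{u}, map (LinearMap.id : V →ₗ[ZMod 2] V) = LinearMap.id)
    (map_comp : ∀ {V W X : FG.{u}} (f : V →ₗ[ZMod 2] W) (g : W →ₗ[ZMod 2] X),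
      map (g ∘ₗ f) = map g ∘ₗ map f) : Fn.{u} where
  obj V := ModuleCat.of (ZMod 2) (obj V)
  map f := ModuleCat.ofHom (map f.hom.hom)
  map_id V := by
    ext1
    exact map_id V
  map_comp f g := by
    ext1
    exact map_comp f.hom.hom g.hom.hom

/-- The action of a functor on linear maps. -/
def act (F : Fn.{u}) {V W : FG.{u}} (f : V →ₗ[ZMod 2] W) : F.obj V →ₗ[ZMod 2] F.obj W :=
  (F.map (FGModuleCat.ofHom f)).hom

lemma act_id (F : Fn.{u}) {V : FG.{u}} (x : F.obj V) : act F (LinearMap.id : V →ₗ[ZMod 2] V) x = x := by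
  have : (FGModuleCat.ofHom (LinearMap.id : V →ₗ[ZMod 2] V)) = 𝟙 V := rfl
  unfold act
  rw [this, F.map_id]; rfl

lemma act_act (F : Fn.{u}) {V W X : FG.{u}} (f : V →ₗ[ZMod 2] W) (g : W →ₗ[ZMod 2] X)
    (x : F.obj V) : act F g (act F f x) = act F (g ∘ₗ f) x := by
  have : FGModuleCat.ofHom (g ∘ₗ f) = FGModuleCat.ofHom f ≫ FGModuleCat.ofHom g := rfl
  unfold act
  rw [this, F.map_comp]; rfl

lemma map_eq_act (F : Fn.{u}) {V W : FG.{u}} (f : V ⟶ W) : (F.map f).hom = act F f.hom.hom := rfl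

lemma nat_act {F G : Fn.{u}} (φ : F ⟶ G) {V W : FG.{u}} (f : V →ₗ[ZMod 2] W) (x : F.obj V) :
    (φ.app W).hom (act F f x) = act G f ((φ.app V).hom x) :=
  congrArg (fun h => h.hom x) (φ.naturality (FGModuleCat.ofHom f))

/-- Construct a natural transformation. -/
def mkNat {F G : Fn.{u}} (app : ∀ V : FG.{u}, F.obj V →ₗ[ZMod 2] G.obj V)
    (nat : ∀ {V W : FG.{u}} (f : V →ₗ[ZMod 2] W) (x : F.obj V),
      app W (act F f x) = act G f (app V x)) : F ⟶ G where
  app V := ModuleCat.ofHom (app V)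
  naturality V W f := by
    ext x
    exact nat f.hom.hom x

@[simp] lemma mkNat_app {F G : Fn.{u}} (app : ∀ V : FG.{u}, F.obj V →ₗ[ZMod 2] G.obj V)
    (nat : ∀ {V W : FG.{u}} (f : V →ₗ[ZMod 2] W) (x : F.obj V),
      app W (act F f x) = act G f (app V x)) (V : FG.{u}) (x : F.obj V) :
    ((mkNat app nat).app V).hom x = app V x := rfl

lemma nat_ext {F G : Fn.{u}} {φ ψ : F ⟶ G}
    (h : ∀ (V : FG.{u}) (x : F.obj V), (φ.app V).hom x = (ψ.app V).hom x) : φ = ψ := by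
  ext V x
  exact h V x

lemma mono_of_inj {F G : Fn.{u}} (φ : F ⟶ G) (h : ∀ V, Function.Injective (φ.app V).hom) :
    Mono φ := by
  have : ∀ V, Mono (φ.app V) := fun V => (ModuleCat.mono_iff_injective _).2 (h V)
  exact NatTrans.mono_of_mono_app φ

lemma epi_of_surj {F G : Fn.{u}} (φ : F ⟶ G) (h : ∀ V, Function.Surjective (φ.app V).hom) :
    Epi φ := by
  have : ∀ V, Epi (φ.app V) := fun V => (ModuleCat.epi_iff_surjective _).2 (h V)
  exact NatTrans.epi_of_epi_app φ

lemma inj_of_mono {F G : Fn.{u}} (φ : F ⟶ G) [Mono φ] (V : FG.{u}) :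
    Function.Injective (φ.app V).hom :=
  (ModuleCat.mono_iff_injective _).1 inferInstance

lemma surj_of_epi {F G : Fn.{u}} (φ : F ⟶ G) [Epi φ] (V : FG.{u}) :
    Function.Surjective (φ.app V).hom :=
  (ModuleCat.epi_iff_surjective _).1 inferInstance

lemma shortExact_of {A B C : Fn.{u}} (f : A ⟶ B) (g : B ⟶ C) (w : f ≫ g = 0)
    (hf : ∀ V, Function.Injective (f.app V).hom) (hg : ∀ V, Function.Surjective (g.app V).hom)
    (hfg : ∀ V (b : B.obj V), (g.app V).hom b = 0 → ∃ a, (f.app V).hom a = b) :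
    (ShortComplex.mk f g w).ShortExact := by
  have := mono_of_inj f hf
  have := epi_of_surj g hg
  refine ShortComplex.ShortExact.mk ?_
  rw [ShortComplex.exact_iff_isZero_homology, Functor.isZero_iff]
  intro V
  have e := (ShortComplex.mk f g w).mapHomologyIso ((evaluation _ _).obj V)
  refine IsZero.of_iso ?_ e.symm
  rw [← ShortComplex.exact_iff_isZero_homology, ShortComplex.moduleCat_exact_iff]
  exact hfg V

/-- `Ext^n(I, F)`. -/
abbrev E [HasExt.{1} Fn.{u}] (F : Fn.{u}) (n : ℕ) := Ext (inclFunctor : Fn.{u}) F n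

variable [HasExt.{1} Fn.{u}]

/-- functoriality -/
def Em {F G : Fn.{u}} (f : F ⟶ G) (n : ℕ) : E F n →+ E G n :=
  (Ext.mk₀ f).postcomp _ (add_zero n)

lemma Em_apply {F G : Fn.{u}} (f : F ⟶ G) (n : ℕ) (x : E F n) :
  Em f n x = x.comp (Ext.mk₀ f) (add_zero n) := rfl

lemma Em_id {F : Fn.{u}} (n : ℕ) (x : E F n) : Em (𝟙 F) n x = x := by
  simp [Em_apply]

lemma Em_comp {F G H : Fn.{u}} (f : F ⟶ G) (g : G ⟶ H) (n : ℕ) (x : E F n) :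
    Em (f ≫ g) n x = Em g n (Em f n x) := by
  simp only [Em_apply]
  rw [Ext.comp_assoc_of_third_deg_zero, Ext.mk₀_comp_mk₀]

lemma Em_add {F G : Fn.{u}} (f g : F ⟶ G) (n : ℕ) (x : E F n) :
    Em (f + g) n x = Em f n x + Em g n x := by
  simp [Em_apply, Ext.mk₀_add]

lemma Em_zero {F G : Fn.{u}} (n : ℕ) (x : E F n) :
    Em (0 : F ⟶ G) n x = 0 := by
  simp [Em_apply]

def Eiso {F G : Fn.{u}} (e : F ≅ G) (n : ℕ) : E F n ≃+ E G n where
  toFun := Em e.hom n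
  invFun := Em e.inv n
  left_inv x := by rw [← Em_comp, e.hom_inv_id, Em_id]
  right_inv x := by rw [← Em_comp, e.inv_hom_id, Em_id]
  map_add' := map_add _

/-- The long exact sequence. -/
lemma les {A B C : Fn.{u}} (f : A ⟶ B) (g : B ⟶ C) (w : f ≫ g = 0)
    (hS : (ShortComplex.mk f g w).ShortExact) :
    ∃ δ : ∀ n, E C n →+ E A (n + 1),
      (∀ n, Function.Exact (Em f n) (Em g n)) ∧
      (∀ n, Function.Exact (Em g n) (δ n)) ∧
      (∀ n, Function.Exact (δ n) (Em f (n + 1))) := by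
  refine ⟨fun n => hS.extClass.postcomp _ rfl, fun n y => ⟨fun h => ?_, ?_⟩,
    fun n y => ⟨fun h => ?_, ?_⟩, fun n y => ⟨fun h => ?_, ?_⟩⟩
  · exact Ext.covariant_sequence_exact₂ _ hS y h
  · rintro ⟨x, rfl⟩
    rw [← Em_comp, w, Em_zero]
  · exact Ext.covariant_sequence_exact₃ _ hS y rfl h
  · rintro ⟨x, rfl⟩
    change (x.comp (Ext.mk₀ g) (add_zero n)).comp hS.extClass rfl = 0
    rw [Ext.comp_assoc_of_second_deg_zero]
    have := hS.comp_extClass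
    dsimp only at this
    rw [this, Ext.comp_zero]
  · exact Ext.covariant_sequence_exact₁ _ hS y h rfl
  · rintro ⟨x, rfl⟩
    change (x.comp hS.extClass rfl).comp (Ext.mk₀ f) (add_zero _) = 0
    rw [Ext.comp_assoc_of_third_deg_zero]
    have := hS.extClass_comp
    dsimp only at this
    rw [this, Ext.comp_zero]

lemma inj_zero {F G : Fn.{u}} (f : F ⟶ G) [Mono f] : Function.Injective (Em f 0) :=
  Ext.postcomp_mk₀_injective_of_mono _ f

end MacLane

namespace MacLane
universe u
open CategoryTheory.Abelian

/-- Products of standard injectives. -/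
def Inj {α : Type u} (A : α → FG.{u}) (M : α → ModuleCat.{u} (ZMod 2)) : Fn.{u} :=
  mkFun (fun V => ∀ a, (V →ₗ[ZMod 2] A a) → M a)
    (fun f => LinearMap.pi fun a => LinearMap.pi fun g =>
      LinearMap.proj (g ∘ₗ f) ∘ₗ LinearMap.proj a)
    (fun V => by ext φ a g; rfl) (fun f g => by ext φ a h; rfl)

lemma Inj_act {α : Type u} (A : α → FG.{u}) (M : α → ModuleCat.{u} (ZMod 2)) {V W : FG.{u}}
    (f : V →ₗ[ZMod 2] W) (φ : (Inj A M).obj V) (a : α) (g : W →ₗ[ZMod 2] A a) :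
    (act (Inj A M) f φ : ∀ a, (W →ₗ[ZMod 2] A a) → M a) a g =
      (φ : ∀ a, (V →ₗ[ZMod 2] A a) → M a) a (g ∘ₗ f) := rfl

/-- Morphisms into `Inj`. -/
def toInj {α : Type u} {A : α → FG.{u}} {M : α → ModuleCat.{u} (ZMod 2)} (F : Fn.{u})
    (ψ : ∀ a, F.obj (A a) →ₗ[ZMod 2] M a) : F ⟶ Inj A M :=
  mkNat (fun V => (LinearMap.pi fun a => LinearMap.pi fun g => ψ a ∘ₗ act F g :
      F.obj V →ₗ[ZMod 2] (∀ a, (V →ₗ[ZMod 2] A a) → M a)))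
    (fun f x => by
      funext a g
      exact congrArg (ψ a) (act_act F f g x))

lemma toInj_app {α : Type u} {A : α → FG.{u}} {M : α → ModuleCat.{u} (ZMod 2)} (F : Fn.{u})
    (ψ : ∀ a, F.obj (A a) →ₗ[ZMod 2] M a) (V : FG.{u}) (x : F.obj V) (a : α)
    (g : V →ₗ[ZMod 2] A a) :
    (((toInj F ψ).app V).hom x : ∀ a, (V →ₗ[ZMod 2] A a) → M a) a g = ψ a (act F g x) := rfl

/-- Evaluation at the identity. -/
def atId {α : Type u} {A : α → FG.{u}} {M : α → ModuleCat.{u} (ZMod 2)} (a : α) :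
    (Inj A M).obj (A a) →ₗ[ZMod 2] M a :=
  (LinearMap.proj LinearMap.id ∘ₗ LinearMap.proj a :
    (∀ b, (A a →ₗ[ZMod 2] A b) → M b) →ₗ[ZMod 2] M a)

instance {α : Type u} (A : α → FG.{u}) (M : α → ModuleCat.{u} (ZMod 2)) : Injective (Inj A M) where
  factors {F G} φ ι _ := by
    have H : ∀ a, ∃ ψ : G.obj (A a) →ₗ[ZMod 2] M a,
        ψ ∘ₗ (ι.app (A a)).hom = atId a ∘ₗ (φ.app (A a)).hom := fun a => by
      obtain ⟨r, hr⟩ := (ι.app (A a)).hom.exists_leftInverse_of_injective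
        (LinearMap.ker_eq_bot.2 (inj_of_mono ι (A a)))
      exact ⟨(atId a ∘ₗ (φ.app (A a)).hom) ∘ₗ r, by rw [LinearMap.comp_assoc, hr]; rfl⟩
    choose ψ hψ using H
    refine ⟨toInj G ψ, nat_ext fun V x => ?_⟩
    funext a g
    change ψ a (act G g ((ι.app V).hom x)) = _
    rw [← nat_act ι g x]
    have := LinearMap.congr_fun (hψ a) (act F g x)
    refine this.trans ?_
    change atId a ((φ.app (A a)).hom (act F g x)) = _
    rw [nat_act φ g x]
    rfl

/-- The doubling functor. -/
def T : FG.{u} ⥤ FG.{u} where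
  obj V := FGModuleCat.of (ZMod 2) (V × V)
  map f := FGModuleCat.ofHom (LinearMap.prodMap f.hom.hom f.hom.hom)

/-- `T F = F ∘ T`. -/
abbrev TF (F : Fn.{u}) : Fn.{u} := T ⋙ F

lemma TF_act (F : Fn.{u}) {V W : FG.{u}} (f : V →ₗ[ZMod 2] W) (x : F.obj (T.obj V)) :
    act (TF F) f x = act F (V := T.obj V) (W := T.obj W) (LinearMap.prodMap f f) x := rfl

def TInjIso {α : Type u} (A : α → FG.{u}) (M : α → ModuleCat.{u} (ZMod 2)) :
    TF (Inj A M) ≅ Inj (fun a => T.obj (A a)) M where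
  hom := mkNat (fun V => (LinearMap.pi fun a => LinearMap.pi fun (g : V →ₗ[ZMod 2] (A a × A a)) =>
      LinearMap.proj (LinearMap.coprod (LinearMap.fst _ _ _ ∘ₗ g) (LinearMap.snd _ _ _ ∘ₗ g))
         ∘ₗ LinearMap.proj a :
         (∀ a, ((V × V) →ₗ[ZMod 2] A a) → M a) →ₗ[ZMod 2] (∀ a, (V →ₗ[ZMod 2] (A a × A a)) → M a)))
    (fun {V W} f x => by
      funext a (g : W →ₗ[ZMod 2] (A a × A a))
      refine congrArg ((x : (∀ a, ((V × V) →ₗ[ZMod 2] A a) → M a)) a) ?_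
      exact LinearMap.ext fun v => rfl)
  inv := mkNat (fun V => (LinearMap.pi fun a => LinearMap.pi fun (g : (V × V) →ₗ[ZMod 2] A a) =>
      LinearMap.proj (LinearMap.prod (g ∘ₗ LinearMap.inl _ _ _) (g ∘ₗ LinearMap.inr _ _ _))
         ∘ₗ LinearMap.proj a :
         (∀ a, (V →ₗ[ZMod 2] (A a × A a)) → M a) →ₗ[ZMod 2] (∀ a, ((V × V) →ₗ[ZMod 2] A a) → M a)))
    (fun {V W} f x => by
      funext a (g : (W × W) →ₗ[ZMod 2] A a)
      refine congrArg ((x : (∀ a, (V →ₗ[ZMod 2] (A a × A a)) → M a)) a) ?_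
      refine LinearMap.ext fun (v : V) => Prod.ext ?_ ?_
      · change g (f v, 0) = g (f v, f 0)
        rw [map_zero]
      · change g (0, f v) = g (f 0, f v)
        rw [map_zero])
  hom_inv_id := nat_ext fun V x => by
    funext a (g : (V × V) →ₗ[ZMod 2] A a)
    refine congrArg ((x : (∀ a, ((V × V) →ₗ[ZMod 2] A a) → M a)) a) ?_
    ext v <;> simp
  inv_hom_id := nat_ext fun V x => by
    funext a (g : V →ₗ[ZMod 2] (A a × A a))
    refine congrArg ((x : (∀ a, (V →ₗ[ZMod 2] (A a × A a)) → M a)) a) ?_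
    ext v <;> simp

instance {α : Type u} (A : α → FG.{u}) (M : α → ModuleCat.{u} (ZMod 2)) :
    Injective (TF (Inj A M)) := Injective.of_iso (TInjIso A M).symm inferInstance

/-- Enough injectives of this type. -/
def stdA (k : ULift.{u} ℕ) : FG.{u} := FGModuleCat.of (ZMod 2) (ULift.{u} (Fin k.down) → ZMod 2)

def envl (H : Fn.{u}) : H ⟶ Inj stdA (fun k => H.obj (stdA k)) := toInj H fun _ => LinearMap.id

instance (H : Fn.{u}) : Mono (envl H) := mono_of_inj _ fun V x y hxy => by
  let k : ULift.{u} ℕ := ⟨Module.finrank (ZMod 2) V⟩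
  let e : V ≃ₗ[ZMod 2] stdA k := (Module.finBasis (ZMod 2) V).equivFun ≪≫ₗ
    LinearEquiv.funCongrLeft (ZMod 2) (ZMod 2) Equiv.ulift
  have h := congrFun (congrFun (α := ULift.{u} ℕ) hxy k) e.toLinearMap
  replace h : act H e.toLinearMap x = act H e.toLinearMap y := h
  replace h := congrArg (act H e.symm.toLinearMap) h
  rw [act_act, act_act] at h
  have h2 : e.symm.toLinearMap ∘ₗ e.toLinearMap = LinearMap.id := by ext; simp
  rwa [h2, act_id, act_id] at h

end MacLane

namespace MacLane
universe u
open CategoryTheory.Abelian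

section
variable {V W X : FG.{u}}

/-- maps between doubled spaces, seen as linear maps between objects of `FG` -/
abbrev toT (f : V →ₗ[ZMod 2] W × W) : V →ₗ[ZMod 2] T.obj W := f
abbrev frT (f : V × V →ₗ[ZMod 2] W) : T.obj V →ₗ[ZMod 2] W := f
abbrev TT (f : V × V →ₗ[ZMod 2] W × W) : T.obj V →ₗ[ZMod 2] T.obj W := f

def i1 (V : FG.{u}) : V →ₗ[ZMod 2] T.obj V := toT (LinearMap.inl (ZMod 2) V V)
def i2 (V : FG.{u}) : V →ₗ[ZMod 2] T.obj V := toT (LinearMap.inr (ZMod 2) V V)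
def diag (V : FG.{u}) : V →ₗ[ZMod 2] T.obj V := toT (LinearMap.prod LinearMap.id LinearMap.id)
def pr1 (V : FG.{u}) : T.obj V →ₗ[ZMod 2] V := frT (LinearMap.fst (ZMod 2) V V)
def pr2 (V : FG.{u}) : T.obj V →ₗ[ZMod 2] V := frT (LinearMap.snd (ZMod 2) V V)
def a1 (V : FG.{u}) : T.obj V →ₗ[ZMod 2] T.obj V :=
  TT (LinearMap.prodMap (LinearMap.id : V →ₗ[ZMod 2] V) (0 : V →ₗ[ZMod 2] V))
def a2 (V : FG.{u}) : T.obj V →ₗ[ZMod 2] T.obj V :=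
  TT (LinearMap.prodMap (0 : V →ₗ[ZMod 2] V) (LinearMap.id : V →ₗ[ZMod 2] V))
/-- doubling a map -/
def dbl (f : V →ₗ[ZMod 2] W) : T.obj V →ₗ[ZMod 2] T.obj W := TT (LinearMap.prodMap f f)
end

lemma TF_act' (F : Fn.{u}) {V W : FG.{u}} (f : V →ₗ[ZMod 2] W) (x : F.obj (T.obj V)) :
    act (TF F) f x = act F (dbl f) x := rfl

lemma TF_act0 (F : Fn.{u}) {V W : FG.{u}} (f : V →ₗ[ZMod 2] W) (x : (TF F).obj V) :
    act (TF F) f x = (act F (dbl f) : F.obj (T.obj V) →ₗ[ZMod 2] F.obj (T.obj W)) x := rfl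

lemma act_congr (F : Fn.{u}) {V W : FG.{u}} {f g : V →ₗ[ZMod 2] W} (h : f = g) (x : F.obj V) :
    act F f x = act F g x := by rw [h]

/-- The cross-effect type operator. -/
def ee (F : Fn.{u}) : TF F ⟶ TF F :=
  mkNat (fun V => (LinearMap.id + act F (a1 V) + act F (a2 V) + act F (0 : T.obj V →ₗ[ZMod 2] T.obj V) :
      F.obj (T.obj V) →ₗ[ZMod 2] F.obj (T.obj V)))
    (fun {V W} f (x : F.obj (T.obj V)) => by
      change _ = (act F (dbl f) : F.obj (T.obj V) →ₗ[ZMod 2] F.obj (T.obj W)) _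
      simp only [LinearMap.add_apply, map_add, TF_act', act_act, LinearMap.id_apply]
      congr 1
      · congr 1
        · congr 1
          refine act_congr F (LinearMap.ext fun v => ?_) x
          refine Prod.ext rfl (map_zero f).symm
        · refine act_congr F (LinearMap.ext fun v => ?_) x
          refine Prod.ext (map_zero f).symm rfl
      · refine act_congr F (LinearMap.ext fun v => ?_) x
        exact Prod.ext (map_zero f).symm (map_zero f).symm)

lemma ee_app (F : Fn.{u}) (V : FG.{u}) (x : F.obj (T.obj V)) :
    ((ee F).app V).hom x = x + act F (a1 V) x + act F (a2 V) x +
      act F (0 : T.obj V →ₗ[ZMod 2] T.obj V) x := rfl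

lemma ee_nat {F G : Fn.{u}} (φ : F ⟶ G) :
    Functor.whiskerLeft T φ ≫ ee G = ee F ≫ Functor.whiskerLeft T φ := by
  refine nat_ext fun V x => ?_
  change ((ee G).app V).hom ((φ.app (T.obj V)).hom x) = (φ.app (T.obj V)).hom (((ee F).app V).hom x)
  rw [ee_app, ee_app]
  simp only [map_add, nat_act]

variable [HasExt.{1} Fn.{u}]

lemma incl_act {V W : FG.{u}} (f : V →ₗ[ZMod 2] W) (v : V) :
    act (inclFunctor : Fn.{u}) f v = f v := rfl

lemma hom_ee (H : Fn.{u}) (φ : (inclFunctor : Fn.{u}) ⟶ TF H) : φ ≫ ee H = 0 := by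
  refine nat_ext fun V v => ?_
  change ((ee H).app V).hom ((φ.app V).hom v) = 0
  obtain ⟨x, hx⟩ : ∃ x : H.obj (T.obj V), x = (φ.app V).hom v := ⟨_, rfl⟩
  rw [← hx]
  have h1 : act (TF H) (diag V) x = act (TF H) (i1 V) x + act (TF H) (i2 V) x := by
    rw [hx, ← nat_act, ← nat_act, ← nat_act, ← map_add]
    congr 1
    exact Prod.ext (add_zero _).symm (zero_add _).symm
  have h0 : act (TF H) (0 : V →ₗ[ZMod 2] V) x = 0 := by
    rw [hx, ← nat_act]
    exact map_zero _
  let β : T.obj (T.obj V) →ₗ[ZMod 2] T.obj V :=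
    TT (W := V) (V := T.obj V) (LinearMap.prodMap (pr1 V) (pr2 V))
  have h2 := congrArg (act H β) h1
  rw [map_add, TF_act', TF_act', TF_act', act_act, act_act, act_act] at h2
  have h3 : act H (LinearMap.id : T.obj V →ₗ[ZMod 2] T.obj V) x = act H (a1 V) x + act H (a2 V) x := h2
  rw [act_id] at h3
  have h4 : act H (0 : T.obj V →ₗ[ZMod 2] T.obj V) x = 0 := h0
  rw [ee_app, h4, add_zero, add_assoc]
  refine (congrArg (x + ·) h3.symm).trans ?_
  exact ZModModule.add_self x

/-- whiskering a short exact sequence -/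
lemma T_shortExact {A B C : Fn.{u}} (f : A ⟶ B) (g : B ⟶ C) (w : f ≫ g = 0)
    (hf : ∀ V, Function.Injective (f.app V).hom) (hg : ∀ V, Function.Surjective (g.app V).hom)
    (hfg : ∀ V (b : B.obj V), (g.app V).hom b = 0 → ∃ a, (f.app V).hom a = b) :
    (ShortComplex.mk (Functor.whiskerLeft T f) (Functor.whiskerLeft T g)
      (by rw [← Functor.whiskerLeft_comp, w]; rfl)).ShortExact :=
  shortExact_of _ _ _ (fun V => hf (T.obj V)) (fun V => hg (T.obj V)) (fun V => hfg (T.obj V))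

lemma exists_coker {A B : Fn.{u}} (f : A ⟶ B) :
    ∃ (C : Fn.{u}) (g : B ⟶ C) (_ : f ≫ g = 0), (∀ V, Function.Surjective (g.app V).hom) ∧
    (∀ V (b : B.obj V), (g.app V).hom b = 0 → ∃ a, (f.app V).hom a = b) := by
  let C : Fn.{u} := mkFun (fun V => B.obj V ⧸ LinearMap.range (f.app V).hom)
    (fun {V W} h => Submodule.mapQ _ _ (act B h) (by
      rintro _ ⟨y, rfl⟩
      exact ⟨act A h y, nat_act f h y⟩))
    (fun V => by
      refine Submodule.linearMap_qext _ (LinearMap.ext fun x => ?_)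
      exact congrArg (Submodule.Quotient.mk) (act_id B x))
    (fun {V W X} h k => by
      refine Submodule.linearMap_qext _ (LinearMap.ext fun x => ?_)
      exact congrArg (Submodule.Quotient.mk) (act_act B h k x).symm)
  refine ⟨C, mkNat (fun V => (Submodule.mkQ _ : B.obj V →ₗ[ZMod 2] _ ⧸ LinearMap.range (f.app V).hom))
    (fun h x => rfl), nat_ext fun V x => ?_, fun V => Submodule.mkQ_surjective _, fun V b hb => ?_⟩
  · exact (Submodule.Quotient.mk_eq_zero _).2 ⟨x, rfl⟩
  · exact (Submodule.Quotient.mk_eq_zero _).1 hb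

lemma Em_ee (n : ℕ) : ∀ (H : Fn.{u}) (x : E (TF H) n), Em (ee H) n x = 0 := by
  induction n with
  | zero =>
    intro H x
    obtain ⟨φ, rfl⟩ := Ext.addEquiv₀.symm.surjective x
    change (Ext.mk₀ φ).comp (Ext.mk₀ (ee H)) (add_zero 0) = 0
    rw [Ext.mk₀_comp_mk₀, hom_ee, Ext.mk₀_zero]
  | succ n ih =>
    intro H x
    obtain ⟨C, g, w, hg, hfg⟩ := exists_coker (envl H)
    have hS := T_shortExact (envl H) g w (inj_of_mono _) hg hfg
    obtain ⟨y, hy⟩ := Ext.covariant_sequence_exact₁ _ hS x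
      (Ext.eq_zero_of_injective (I := TF (Inj stdA (fun k => H.obj (stdA k)))) _) rfl
    have nat := hS.extClass_naturality hS
      { τ₁ := ee H, τ₂ := ee _, τ₃ := ee C, comm₁₂ := (ee_nat _).symm, comm₂₃ := (ee_nat _).symm }
    dsimp only at nat
    rw [← hy, Em_apply, Ext.comp_assoc_of_third_deg_zero, nat,
      ← Ext.comp_assoc_of_second_deg_zero]
    have := ih C y
    rw [Em_apply] at this
    rw [this, Ext.zero_comp]

lemma pr1_diag (V : FG.{u}) : a1 V ∘ₗ diag V = i1 V := rfl
lemma pr2_diag (V : FG.{u}) : a2 V ∘ₗ diag V = i2 V := rfl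

/-- Vanishing criterion. -/
lemma vanish (F : Fn.{u}) (q : TF F ⟶ F)
    (h : ∀ V (x : F.obj V), (q.app V).hom (act F (diag V) x) = x)
    (h1 : ∀ V (x : F.obj V), (q.app V).hom (act F (i1 V) x) = 0)
    (h2 : ∀ V (x : F.obj V), (q.app V).hom (act F (i2 V) x) = 0) (n : ℕ) :
    Subsingleton (E F n) := by
  let Δ : F ⟶ TF F := mkNat (fun V => act F (diag V)) (fun {V W} f x => by
    rw [act_act, TF_act', act_act]; rfl)
  have key : Δ ≫ ee F ≫ q = 𝟙 F := nat_ext fun V x => by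
    change (q.app V).hom (((ee F).app V).hom (act F (diag V) x)) = x
    rw [ee_app, map_add, map_add, map_add, h, act_act, act_act, act_act]
    change x + (q.app V).hom (act F (i1 V) x) + (q.app V).hom (act F (i2 V) x) + _ = x
    rw [h1, h2]
    have : (0 : T.obj V →ₗ[ZMod 2] T.obj V) ∘ₗ diag V = i1 V ∘ₗ (0 : V →ₗ[ZMod 2] V) :=
      LinearMap.ext fun v => (Prod.ext rfl rfl)
    rw [this, ← act_act, h1]
    simp
  refine subsingleton_of_forall_eq 0 fun x => ?_
  rw [← Em_id n x, ← key, Em_comp, Em_comp, Em_ee, map_zero]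

/-- The additivity defect. -/
def kk (F : Fn.{u}) : F ⟶ TF F :=
  mkNat (fun V => (act F (diag V) + act F (i1 V) + act F (i2 V) :
    F.obj V →ₗ[ZMod 2] F.obj (T.obj V)))
   (fun {V W} f x => by
      simp only [LinearMap.add_apply, map_add, TF_act', act_act]
      congr 1
      · congr 1
        refine act_congr F (LinearMap.ext fun v => ?_) x
        exact Prod.ext rfl (map_zero f).symm
      · refine act_congr F (LinearMap.ext fun v => ?_) x
        exact Prod.ext (map_zero f).symm rfl)

lemma kk_app (F : Fn.{u}) (V : FG.{u}) (x : F.obj V) :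
    ((kk F).app V).hom x = act F (diag V) x + act F (i1 V) x + act F (i2 V) x := rfl

lemma act_zero_of (F : Fn.{u}) (h : ∀ V : FG.{u}, Module.finrank (ZMod 2) V ≤ 1 →
    Subsingleton (F.obj V)) {V W : FG.{u}} (x : F.obj V) :
    act F (0 : V →ₗ[ZMod 2] W) x = 0 := by
  let P : FG.{u} := FGModuleCat.of (ZMod 2) PUnit
  have hP : Module.finrank (ZMod 2) P ≤ 1 := by
    have : Module.finrank (ZMod 2) P = 0 := Module.finrank_zero_of_subsingleton (M := PUnit.{u+1})
    omega
  have := h P hP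
  have e : (0 : V →ₗ[ZMod 2] W) = (0 : P →ₗ[ZMod 2] W) ∘ₗ (0 : V →ₗ[ZMod 2] P) := by simp
  rw [e, ← act_act, Subsingleton.elim (act F (0 : V →ₗ[ZMod 2] P) x) 0, map_zero]

lemma kk_ee (F : Fn.{u}) (h : ∀ V : FG.{u}, Module.finrank (ZMod 2) V ≤ 1 →
    Subsingleton (F.obj V)) : kk F ≫ ee F = kk F := nat_ext fun V x => by
  change ((ee F).app V).hom (((kk F).app V).hom x) = ((kk F).app V).hom x
  rw [ee_app, kk_app, act_zero_of F h]
  simp only [map_add, act_act]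
  have e1 : a1 V ∘ₗ i1 V = i1 V := LinearMap.ext fun v => Prod.ext rfl rfl
  have e2 : a1 V ∘ₗ i2 V = 0 := LinearMap.ext fun v => Prod.ext rfl rfl
  have e3 : a2 V ∘ₗ i2 V = i2 V := LinearMap.ext fun v => Prod.ext rfl rfl
  have e4 : a2 V ∘ₗ i1 V = 0 := LinearMap.ext fun v => Prod.ext rfl rfl
  rw [pr1_diag, pr2_diag, e1, e2, e3, e4, act_zero_of F h]
  have := ZModModule.add_self (act F (i2 V) x)
  have := ZModModule.add_self (act F (i1 V) x)
  simp only [add_zero]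
  simp [*]

lemma additive_of_kk (F : Fn.{u}) {V W : FG.{u}} (x : F.obj V) (hx : ((kk F).app V).hom x = 0)
    (f g : V →ₗ[ZMod 2] W) : act F (f + g) x = act F f x + act F g x := by
  let c : T.obj V →ₗ[ZMod 2] W := frT (LinearMap.coprod f g)
  have h := congrArg (act F c) hx
  rw [kk_app, map_add, map_add, map_zero, act_act, act_act, act_act] at h
  have e1 : c ∘ₗ diag V = f + g := rfl
  have e2 : c ∘ₗ i1 V = f := LinearMap.ext fun v => by
    change f v + g 0 = f v
    simp
  have e3 : c ∘ₗ i2 V = g := LinearMap.ext fun v => by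
    change f 0 + g v = g v
    simp
  rw [e1, e2, e3, add_assoc] at h
  have h2 := ZModModule.add_self (act F f x + act F g x)
  have := h.trans h2.symm
  exact add_right_cancel this

lemma sum_of_kk (F : Fn.{u}) (h : ∀ V : FG.{u}, Module.finrank (ZMod 2) V ≤ 1 →
    Subsingleton (F.obj V)) {V W : FG.{u}} (x : F.obj V) (hx : ((kk F).app V).hom x = 0)
    {ι : Type*} (s : Finset ι) (f : ι → (V →ₗ[ZMod 2] W)) :
    act F (∑ i ∈ s, f i) x = ∑ i ∈ s, act F (f i) x := by
  classical
  induction s using Finset.induction_on with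
  | empty => simp [act_zero_of F h]
  | insert a s ha ih => rw [Finset.sum_insert ha, Finset.sum_insert ha, additive_of_kk F x hx, ih]

lemma kk_inj (F : Fn.{u}) (h : ∀ V : FG.{u}, Module.finrank (ZMod 2) V ≤ 1 →
    Subsingleton (F.obj V)) (V : FG.{u}) : Function.Injective ((kk F).app V).hom := by
  refine (injective_iff_map_eq_zero _).2 fun x hx => ?_
  let b := Module.finBasis (ZMod 2) V
  let P : FG.{u} := FGModuleCat.of (ZMod 2) (ULift.{u} (ZMod 2))
  have hP : Module.finrank (ZMod 2) P ≤ 1 := by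
    have : Module.finrank (ZMod 2) P = 1 :=
      (ULift.moduleEquiv (R := ZMod 2) (M := ZMod 2)).finrank_eq.trans (Module.finrank_self _)
    omega
  have := h P hP
  let f (i) : V →ₗ[ZMod 2] P := ULift.moduleEquiv.symm.toLinearMap ∘ₗ b.coord i
  let g (i) : P →ₗ[ZMod 2] V := (LinearMap.toSpanSingleton (ZMod 2) V (b i)) ∘ₗ
    (ULift.moduleEquiv (R := ZMod 2) (M := ZMod 2)).toLinearMap
  have e : ∑ i, g i ∘ₗ f i = LinearMap.id := LinearMap.ext fun v => by
    rw [LinearMap.sum_apply]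
    exact b.sum_repr v
  rw [← act_id F x, ← e, sum_of_kk F h x hx]
  refine Finset.sum_eq_zero fun i _ => ?_
  rw [← act_act, Subsingleton.elim (act F (f i) x) 0, map_zero]

lemma one_elt (V : FG.{u}) (v : V) : ∃ (P : FG.{u}) (_ : Module.finrank (ZMod 2) P ≤ 1) (f : P →ₗ[ZMod 2] V)
    (w : P), f w = v := by
  let P : FG.{u} := FGModuleCat.of (ZMod 2) (ULift.{u} (ZMod 2))
  have hP : Module.finrank (ZMod 2) P ≤ 1 := by
    have : Module.finrank (ZMod 2) P = 1 :=
      (ULift.moduleEquiv (R := ZMod 2) (M := ZMod 2)).finrank_eq.trans (Module.finrank_self _)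
    omega
  refine ⟨P, hP, (LinearMap.toSpanSingleton (ZMod 2) V v) ∘ₗ
    (ULift.moduleEquiv (R := ZMod 2) (M := ZMod 2)).toLinearMap, (ULift.up 1 : ULift.{u} (ZMod 2)), ?_⟩
  exact one_smul (ZMod 2) v

/-- Connectivity. -/
lemma connectivity (n : ℕ) : ∀ (F : Fn.{u}) (_ : ∀ V : FG.{u}, Module.finrank (ZMod 2) V ≤ 2 ^ n →
    Subsingleton (F.obj V)), Subsingleton (E F n) := by
  induction n with
  | zero =>
    intro F h
    have : Subsingleton ((inclFunctor : Fn.{u}) ⟶ F) := by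
      refine subsingleton_of_forall_eq 0 fun φ => nat_ext fun V (v : V) => ?_
      obtain ⟨P, hP, f, w, rfl⟩ := one_elt V v
      have := h P hP
      have h3 := nat_act φ f w
      refine h3.trans ?_
      rw [Subsingleton.elim ((φ.app P).hom w) 0, map_zero]
      rfl
    exact (Ext.addEquiv₀ (X := (inclFunctor : Fn.{u})) (Y := F)).toEquiv.subsingleton
  | succ n ih =>
    intro F h
    have h1 : ∀ V : FG.{u}, Module.finrank (ZMod 2) V ≤ 1 → Subsingleton (F.obj V) := fun V hV =>
      h V (hV.trans Nat.one_le_two_pow)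
    obtain ⟨C, g, w, hg, hfg⟩ := exists_coker (kk F)
    obtain ⟨δ, -, -, hδ⟩ := les _ _ w (shortExact_of _ _ w (kk_inj F h1) hg hfg)
    have hC : Subsingleton (E C n) := ih C fun V hV => by
      have : Subsingleton ((TF F).obj V) := h (T.obj V) (by
        have : Module.finrank (ZMod 2) (T.obj V) = Module.finrank (ZMod 2) V + Module.finrank (ZMod 2) V :=
          Module.finrank_prod
        rw [this, pow_succ]; omega)
      exact (hg V).subsingleton
    refine subsingleton_of_forall_eq 0 fun x => ?_
    have hx : Em (kk F) (n + 1) x = 0 := by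
      rw [← kk_ee F h1, Em_comp, Em_ee]
    obtain ⟨y, rfl⟩ := (hδ n x).1 hx
    rw [Subsingleton.elim y 0, map_zero]

end MacLane

namespace MacLane
universe u v w
set_option autoImplicit false
open MvPolynomial

/-- index set of a chosen basis -/
abbrev idx (V : FG.{u}) : Type u := Module.Free.ChooseBasisIndex (ZMod 2) V
abbrev bas (V : FG.{u}) : Module.Basis (idx V) (ZMod 2) V := Module.Free.chooseBasis (ZMod 2) V

section ring
variable {k : Type v} [CommRing k] [Algebra (ZMod 2) k] {J : Type w}

/-- polynomial ring on `J` copies of (coordinates of) `V` -/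
abbrev Pol (k : Type v) [CommRing k] (J : Type w) (V : FG.{u}) := MvPolynomial (J × idx V) k

def lin (k : Type v) [CommRing k] [Algebra (ZMod 2) k] {J : Type w} {V : FG.{u}} (j : J) :
    V →ₗ[ZMod 2] Pol k J V := (bas V).constr (ZMod 2) fun i => X (j, i)

lemma lin_bas {V : FG.{u}} (j : J) (i : idx V) : lin k j (bas V i) = X (j, i) := by
  simp [lin]

lemma pol_hom_ext {A : Type*} [CommRing A] [Algebra k A] {V : FG.{u}} {φ ψ : Pol k J V →ₐ[k] A}
    (h : ∀ j v, φ (lin k j v) = ψ (lin k j v)) : φ = ψ := by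
  refine MvPolynomial.algHom_ext fun ⟨j, i⟩ => ?_
  rw [← lin_bas (k := k)]
  exact h j _

variable {A : Type*} [CommRing A] [Algebra k A] [Algebra (ZMod 2) A]

def liftP {V : FG.{u}} (g : J → (V →ₗ[ZMod 2] A)) : Pol k J V →ₐ[k] A :=
  aeval fun p => g p.1 (bas V p.2)

lemma liftP_X {V : FG.{u}} (g : J → (V →ₗ[ZMod 2] A)) (p) :
    liftP (k := k) g (X p) = g p.1 (bas V p.2) := by simp [liftP]

@[simp] lemma liftP_lin {V : FG.{u}} (g : J → (V →ₗ[ZMod 2] A)) (j : J) (v : V) :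
    liftP (k := k) g (lin k j v) = g j v := by
  have : ((liftP (k := k) g : Pol k J V →+ A).toZModLinearMap 2) ∘ₗ lin k j = g j := by
    refine (bas V).ext fun i => ?_
    change liftP (k := k) g (lin k j (bas V i)) = _
    rw [lin_bas, liftP_X]
  exact LinearMap.congr_fun this v

/-- functoriality -/
def mapP {V W : FG.{u}} (f : V →ₗ[ZMod 2] W) : Pol k J V →ₐ[k] Pol k J W :=
  liftP fun j => lin k j ∘ₗ f

@[simp] lemma mapP_lin {V W : FG.{u}} (f : V →ₗ[ZMod 2] W) (j : J) (v : V) :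
    mapP f (lin k j v) = lin k j (f v) := by simp [mapP]

lemma mapP_id {V : FG.{u}} (p : Pol k J V) : mapP (LinearMap.id : V →ₗ[ZMod 2] V) p = p := by
  have : mapP (LinearMap.id : V →ₗ[ZMod 2] V) = AlgHom.id k (Pol k J V) :=
    pol_hom_ext fun j v => by simp
  rw [this]; rfl

lemma mapP_mapP {V W X : FG.{u}} (f : V →ₗ[ZMod 2] W) (g : W →ₗ[ZMod 2] X) (p : Pol k J V) :
    mapP g (mapP f p) = mapP (g ∘ₗ f) p := by
  have : (mapP g).comp (mapP f) = (mapP (g ∘ₗ f) : Pol k J V →ₐ[k] Pol k J X) :=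
    pol_hom_ext fun j v => by simp
  rw [← this]; rfl

variable {M : Type*} [AddCommMonoid M]

lemma aeval_weighted {σ τ : Type*} {w₁ : σ → M} {w₂ : τ → M} (f : σ → MvPolynomial τ k)
    (hf : ∀ i, IsWeightedHomogeneous w₂ (f i) (w₁ i)) (p : MvPolynomial σ k) (c : M)
    (hp : IsWeightedHomogeneous w₁ p c) : IsWeightedHomogeneous w₂ (aeval f p) c := by
  rw [aeval_def, eval₂_eq]
  refine (weightedHomogeneousSubmodule k w₂ c).sum_mem fun d hd => ?_
  have hd' := hp (mem_support_iff.1 hd)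
  rw [← zero_add c]
  refine (isWeightedHomogeneous_C _ _).mul ?_
  rw [← hd', Finsupp.weight_apply, Finsupp.sum]
  exact IsWeightedHomogeneous.prod _ _ _ fun i _ => (hf i).pow (d i)

lemma lin_weighted {V : FG.{u}} (w : J → M) (j : J) (v : V) :
    IsWeightedHomogeneous (fun p : J × idx V => w p.1) (lin k j v) (w j) := by
  have : lin k j v = ∑ i, (bas V).repr v i • (X (j, i) : Pol k J V) := by
    rw [lin, Module.Basis.constr_apply_fintype]
    rfl
  rw [this]
  refine (weightedHomogeneousSubmodule k (fun p : J × idx V => w p.1) (w j)).sum_mem fun i _ => ?_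
  rw [← algebraMap_smul k]
  exact Submodule.smul_mem _ _ (isWeightedHomogeneous_X k _ (j, i))

lemma liftP_weighted {K : Type*} {V W : FG.{u}} {w : J → M} {w' : K → M}
    (g : J → (V →ₗ[ZMod 2] Pol k K W))
    (hg : ∀ j v, IsWeightedHomogeneous (fun p : K × idx W => w' p.1) (g j v) (w j))
    (c : M) (p : Pol k J V) (hp : IsWeightedHomogeneous (fun p : J × idx V => w p.1) p c) :
    IsWeightedHomogeneous (fun p : K × idx W => w' p.1) (liftP (k := k) g p) c :=
  aeval_weighted (w₁ := fun p : J × idx V => w p.1) (w₂ := fun p : K × idx W => w' p.1)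
    (fun p => g p.1 (bas V p.2)) (fun i => hg i.1 (bas V i.2)) p c hp

end ring

variable {J : Type} {M : Type} [AddCommMonoid M]

/-- weighted homogeneous polynomials of degree `c` -/
abbrev polSub (w : J → M) (c : M) (V : FG.{u}) : Submodule (ZMod 2) (Pol (ZMod 2) J V) :=
  weightedHomogeneousSubmodule (ZMod 2) (fun p : J × idx V => w p.1) c

lemma mapP_mem (w : J → M) (c : M) {V W : FG.{u}} (f : V →ₗ[ZMod 2] W) (p : Pol (ZMod 2) J V)
    (hp : p ∈ polSub w c V) : mapP f p ∈ polSub w c W :=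
  liftP_weighted (k := ZMod 2) (w := w) (w' := w) (fun j => lin (ZMod 2) j ∘ₗ f)
    (fun j v => lin_weighted w j (f v)) c p hp

def mapS (w : J → M) (c : M) {V W : FG.{u}} (f : V →ₗ[ZMod 2] W) :
    polSub w c V →ₗ[ZMod 2] polSub w c W :=
  ((mapP f : Pol (ZMod 2) J V →ₐ[ZMod 2] Pol (ZMod 2) J W).toLinearMap).restrict (mapP_mem w c f)

def polyF (w : J → M) (c : M) : Fn.{u} :=
  mkFun (fun V => polSub w c V) (fun f => mapS w c f)
    (fun V => LinearMap.ext fun x => Subtype.ext (mapP_id _))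
    (fun f g => LinearMap.ext fun x => Subtype.ext (mapP_mapP _ _ _).symm)

/-- underlying polynomial -/
def toPol {w : J → M} {c : M} {V : FG.{u}} (x : (polyF w c).obj V) : Pol (ZMod 2) J V :=
  (show polSub w c V from x).1

lemma toPol_mem {w : J → M} {c : M} {V : FG.{u}} (x : (polyF w c).obj V) :
    toPol x ∈ polSub w c V := (show polSub w c V from x).2

lemma toPol_inj {w : J → M} {c : M} {V : FG.{u}} {x y : (polyF w c).obj V}
    (h : toPol x = toPol y) : x = y := Subtype.ext h

def ofPol {w : J → M} {c : M} {V : FG.{u}} (p : Pol (ZMod 2) J V) (hp : p ∈ polSub w c V) :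
    (polyF.{u} w c).obj V := (⟨p, hp⟩ : polSub w c V)

@[simp] lemma toPol_ofPol {w : J → M} {c : M} {V : FG.{u}} (p : Pol (ZMod 2) J V)
    (hp : p ∈ polSub w c V) : toPol (ofPol p hp) = p := rfl

@[simp] lemma toPol_add {w : J → M} {c : M} {V : FG.{u}} (x y : (polyF w c).obj V) :
    toPol (x + y) = toPol x + toPol y := rfl

@[simp] lemma toPol_zero {w : J → M} {c : M} {V : FG.{u}} :
    toPol (0 : (polyF w c).obj V) = 0 := rfl

@[simp] lemma toPol_act {w : J → M} {c : M} {V W : FG.{u}} (f : V →ₗ[ZMod 2] W)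
    (x : (polyF w c).obj V) : toPol (act (polyF w c) f x) = mapP f (toPol x) := rfl

/-- Natural transformations out of `polyF` given by additive maps. -/
def polNat {J' M' : Type} [AddCommMonoid M'] {w : J → M} {c : M} {w' : J' → M'} {c' : M'}
    (φ : ∀ V : FG.{u}, Pol (ZMod 2) J V →+ Pol (ZMod 2) J' V)
    (h : ∀ V p, p ∈ polSub w c V → φ V p ∈ polSub w' c' V)
    (nat : ∀ (V W : FG.{u}) (f : V →ₗ[ZMod 2] W) (p : Pol (ZMod 2) J V), φ W (mapP f p) = mapP f (φ V p)) :
    polyF.{u} w c ⟶ polyF.{u} w' c' :=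
  mkNat (fun V => (((φ V).toZModLinearMap 2).restrict (h V) : polSub w c V →ₗ[ZMod 2] polSub w' c' V))
    (fun f x => toPol_inj (nat _ _ f (toPol x)))

@[simp] lemma polNat_app {J' M' : Type} [AddCommMonoid M'] {w : J → M} {c : M} {w' : J' → M'} {c' : M'}
    (φ : ∀ V : FG.{u}, Pol (ZMod 2) J V →+ Pol (ZMod 2) J' V)
    (h : ∀ V p, p ∈ polSub w c V → φ V p ∈ polSub w' c' V)
    (nat : ∀ (V W : FG.{u}) (f : V →ₗ[ZMod 2] W) (p : Pol (ZMod 2) J V), φ W (mapP f p) = mapP f (φ V p))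
    (V : FG.{u}) (x : (polyF w c).obj V) :
    toPol (((polNat φ h nat).app V).hom x) = φ V (toPol x) := rfl

/-- Symmetric powers. -/
abbrev wS : Unit → ℕ := fun _ => 1
abbrev S (n : ℕ) : Fn.{u} := polyF wS n

/-- Weights on the polynomial ring in two copies of the variables. -/
def wB : Bool → ℕ × ℕ := fun j => if j then (1, 0) else (0, 1)
abbrev Mf (a b : ℕ) : Fn.{u} := polyF wB (a, b)

lemma weight_wB {ι : Type*} [Fintype ι] (m : (Bool × ι) →₀ ℕ) :
    Finsupp.weight (fun p : Bool × ι => wB p.1) m = (∑ i, m (true, i), ∑ i, m (false, i)) := by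
  rw [Finsupp.weight_apply, Finsupp.sum_fintype _ _ (by simp), Fintype.sum_prod_type]
  rw [Fintype.sum_bool]
  ext
  · simp [wB, Prod.fst_sum]
  · simp [wB, Prod.snd_sum]

lemma wB_mem {V : FG.{u}} {a b : ℕ} {p : Pol (ZMod 2) Bool V} (hp : p ∈ polSub wB (a, b) V)
    {m} (hm : m ∈ p.support) : ∑ i, m (true, i) = a ∧ ∑ i, m (false, i) = b := by
  have := hp (mem_support_iff.1 hm)
  rw [weight_wB] at this
  simpa using this

/-- polynomials with `b > 0` are killed by algebra maps killing the `false` variables. -/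
lemma lift_zero_false {A : Type*} [CommRing A] [Algebra (ZMod 2) A] {V : FG.{u}} {a b : ℕ}
    (hb : 0 < b) (g : Bool → (V →ₗ[ZMod 2] A)) (hg : ∀ v, g false v = 0) (p : Pol (ZMod 2) Bool V)
    (hp : p ∈ polSub wB (a, b) V) : liftP (k := ZMod 2) g p = 0 := by
  rw [liftP, aeval_def, eval₂_eq]
  refine Finset.sum_eq_zero fun m hm => ?_
  have h := (wB_mem hp hm).2
  obtain ⟨i, -, hi⟩ := Finset.exists_ne_zero_of_sum_ne_zero (h.trans_ne hb.ne')
  rw [Finset.prod_eq_zero (i := (false, i)) (by simpa using hi), mul_zero]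
  simp [hg, hi]

lemma lift_zero_true {A : Type*} [CommRing A] [Algebra (ZMod 2) A] {V : FG.{u}} {a b : ℕ}
    (ha : 0 < a) (g : Bool → (V →ₗ[ZMod 2] A)) (hg : ∀ v, g true v = 0) (p : Pol (ZMod 2) Bool V)
    (hp : p ∈ polSub wB (a, b) V) : liftP (k := ZMod 2) g p = 0 := by
  rw [liftP, aeval_def, eval₂_eq]
  refine Finset.sum_eq_zero fun m hm => ?_
  have h := (wB_mem hp hm).1
  obtain ⟨i, -, hi⟩ := Finset.exists_ne_zero_of_sum_ne_zero (h.trans_ne ha.ne')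
  rw [Finset.prod_eq_zero (i := (true, i)) (by simpa using hi), mul_zero]
  simp [hg, hi]

def qg (V : FG.{u}) : Bool → (T.obj V →ₗ[ZMod 2] Pol (ZMod 2) Bool V) := fun j =>
  if j then lin (ZMod 2) true ∘ₗ pr1 V else lin (ZMod 2) false ∘ₗ pr2 V

def qM (a b : ℕ) : TF (Mf.{u} a b) ⟶ Mf.{u} a b :=
  mkNat (fun V => ((liftP (k := ZMod 2) (qg V)).toLinearMap.restrict (fun p hp =>
      liftP_weighted (w := wB) (w' := wB) (qg V) (fun j v => by
        cases j
        · exact lin_weighted wB false (pr2 V v)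
        · exact lin_weighted wB true (pr1 V v)) _ p hp) :
      polSub wB (a, b) (T.obj V) →ₗ[ZMod 2] polSub wB (a, b) V))
    (fun {V W} f x => toPol_inj (by
      change liftP (k := ZMod 2) (qg W) (mapP (dbl f) (toPol (V := T.obj V) x)) =
        mapP f (liftP (k := ZMod 2) (qg V) (toPol (V := T.obj V) x))
      have : (liftP (k := ZMod 2) (qg W)).comp (mapP (dbl f)) =
        (mapP f).comp (liftP (k := ZMod 2) (qg V)) := pol_hom_ext fun j v => by
          cases j
          · simp [qg]; rfl
          · simp [qg]; rfl
      exact AlgHom.congr_fun this _))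

lemma qM_app (a b : ℕ) (V : FG.{u}) (x : (Mf a b).obj (T.obj V)) :
    toPol (((qM a b).app V).hom x) = liftP (k := ZMod 2) (qg V) (toPol x) := rfl

variable [HasExt.{1} Fn.{u}]

lemma vanish_M (a b : ℕ) (ha : 0 < a) (hb : 0 < b) (n : ℕ) : Subsingleton (E (Mf.{u} a b) n) := by
  have aux : ∀ (V : FG.{u}) (f : V →ₗ[ZMod 2] T.obj V) (p : Pol (ZMod 2) Bool V),
      liftP (k := ZMod 2) (qg V) (mapP f p) = liftP (k := ZMod 2) (fun j => qg V j ∘ₗ f) p := by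
    intro V f p
    have : (liftP (k := ZMod 2) (qg V)).comp (mapP f) = liftP (k := ZMod 2) (fun j => qg V j ∘ₗ f) :=
      pol_hom_ext fun j v => by simp
    exact AlgHom.congr_fun this _
  refine vanish _ (qM a b) (fun V x => toPol_inj ?_) (fun V x => toPol_inj ?_)
    (fun V x => toPol_inj ?_) n
  · rw [qM_app, toPol_act, aux]
    have : liftP (k := ZMod 2) (fun j => qg V j ∘ₗ diag V) = AlgHom.id _ _ :=
      pol_hom_ext fun j v => by
        cases j
        · simp [qg]; rfl
        · simp [qg]; rfl
    rw [this]; rfl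
  · rw [qM_app, toPol_act, aux]
    exact lift_zero_false hb _ (fun v => map_zero (lin (ZMod 2) false)) _ (toPol_mem x)
  · rw [qM_app, toPol_act, aux]
    exact lift_zero_true ha _ (fun v => map_zero (lin (ZMod 2) true)) _ (toPol_mem x)

end MacLane

namespace MacLane
universe u v w
set_option autoImplicit false
open MvPolynomial

section koszul
variable {ι : Type u}

abbrev PB (ι : Type u) := MvPolynomial (Bool × ι) (ZMod 2)

/-- Koszul/de Rham differential -/
def dd : Derivation (ZMod 2) (PB ι) (PB ι) :=
  mkDerivation (ZMod 2) fun p => if p.1 then X (false, p.2) else 0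

@[simp] lemma dd_true (i : ι) : dd (X (true, i)) = (X (false, i) : PB ι) := by simp [dd]
@[simp] lemma dd_false (i : ι) : dd (X (false, i)) = (0 : PB ι) := by simp [dd]

lemma two_zero (p : PB ι) : p + p = 0 := ZModModule.add_self p

lemma dd_dd (p : PB ι) : dd (dd p) = 0 := by
  induction p using MvPolynomial.induction_on with
  | C a => simp
  | add p q hp hq => simp [hp, hq]
  | mul_X p i hp =>
    obtain ⟨j, i⟩ := i
    have := two_zero (dd p * X (false, i))
    cases j
    · simp [hp]
    · simp [hp]
      linear_combination this

/-- the contracting homotopy in direction `i` on monomials -/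
def sMon [DecidableEq ι] (i : ι) (m : (Bool × ι) →₀ ℕ) : PB ι :=
  if m (false, i) ≠ 0 ∧ Even (m (true, i)) then
    monomial (m - Finsupp.single (false, i) 1 + Finsupp.single (true, i) 1) 1 else 0

def ss [DecidableEq ι] (i : ι) : PB ι →ₗ[ZMod 2] PB ι :=
  (basisMonomials (Bool × ι) (ZMod 2)).constr (ZMod 2) (sMon i)

lemma ss_mon [DecidableEq ι] (i : ι) (m) : ss i (monomial m 1) = sMon i m := by
  have := (basisMonomials (Bool × ι) (ZMod 2)).constr_basis (ZMod 2) (sMon i) m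
  rwa [coe_basisMonomials] at this

def piMon [DecidableEq ι] (i : ι) (m : (Bool × ι) →₀ ℕ) : PB ι :=
  if m (false, i) = 0 ∧ Even (m (true, i)) then monomial m 1 else 0

def pp [DecidableEq ι] (i : ι) : PB ι →ₗ[ZMod 2] PB ι :=
  (basisMonomials (Bool × ι) (ZMod 2)).constr (ZMod 2) (piMon i)

lemma pp_mon [DecidableEq ι] (i : ι) (m) : pp i (monomial m 1) = piMon i m := by
  have := (basisMonomials (Bool × ι) (ZMod 2)).constr_basis (ZMod 2) (piMon i) m
  rwa [coe_basisMonomials] at this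

lemma pol_eq_sum (p : PB ι) : p = ∑ m ∈ p.support, monomial m 1 := by
  conv_lhs => rw [p.as_sum]
  refine Finset.sum_congr rfl fun m hm => ?_
  have h := mem_support_iff.1 hm
  have : coeff m p = 1 := by
    generalize coeff m p = a at h
    revert a; decide
  rw [this]

/-- polynomials not involving `i` -/
def Nv (i : ι) : Subalgebra (ZMod 2) (PB ι) := supported (ZMod 2) {p | p.2 ≠ i}

lemma Nv_mon {i : ι} {r : PB ι} (hr : r ∈ Nv i) {m} (hm : m ∈ r.support) (j : Bool) :
    m (j, i) = 0 := by
  rw [Nv, mem_supported] at hr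
  by_contra h
  have : (j, i) ∈ r.vars := mem_vars_iff_mem_support _ |>.2 ⟨m, hm, Finsupp.mem_support_iff.2 h⟩
  exact hr this rfl

lemma mon_Nv {i : ι} {m : (Bool × ι) →₀ ℕ} (hm : ∀ j, m (j, i) = 0) :
    (monomial m 1 : PB ι) ∈ Nv i := by
  rw [Nv, mem_supported]
  intro p hp
  rw [Finset.mem_coe, mem_vars_iff_mem_support] at hp
  obtain ⟨d, hd, hp⟩ := hp
  have : d = m := by
    have := support_monomial_subset hd
    simpa using this
  subst this
  rintro rfl
  exact Finsupp.mem_support_iff.1 hp (hm _)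

lemma dd_Nv {i : ι} {r : PB ι} (hr : r ∈ Nv i) : dd r ∈ Nv i := by
  unfold Nv supported at hr
  induction hr using Algebra.adjoin_induction with
  | mem x hx =>
    obtain ⟨⟨j, k⟩, hk, rfl⟩ := hx
    cases j
    · rw [dd_false]; exact zero_mem _
    · rw [dd_true]
      exact X_mem_supported.2 hk
  | algebraMap r => rw [Derivation.map_algebraMap]; exact zero_mem _
  | add x y _ _ hx hy => rw [map_add]; exact add_mem hx hy
  | mul x y hx' hy' hx hy =>
    rw [Derivation.leibniz]
    exact add_mem (mul_mem hx' hy) (mul_mem hy' hx)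

lemma split_mon [DecidableEq ι] (i : ι) (m : (Bool × ι) →₀ ℕ) :
    ∃ m' : (Bool × ι) →₀ ℕ, (∀ j, m' (j, i) = 0) ∧
      m = Finsupp.single (false, i) (m (false, i)) + Finsupp.single (true, i) (m (true, i)) + m' := by
  refine ⟨(m.erase (false, i)).erase (true, i), ?_, ?_⟩
  · rintro (_ | _) <;> simp [Finsupp.erase_apply]
  · ext ⟨j, k⟩
    by_cases hk : k = i
    · subst hk
      cases j <;> simp [Finsupp.erase_apply, Finsupp.single_apply]
    · simp [Finsupp.erase_apply, Finsupp.single_apply, Ne.symm hk, hk]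

lemma q_mon [DecidableEq ι] (i : ι) (a b : ℕ) (m : (Bool × ι) →₀ ℕ) :
    (X (false, i) ^ b * X (true, i) ^ a * monomial m 1 : PB ι) =
      monomial (Finsupp.single (false, i) b + Finsupp.single (true, i) a + m) 1 := by
  rw [X_pow_eq_monomial, X_pow_eq_monomial, monomial_mul, monomial_mul]; simp

lemma ss_mul [DecidableEq ι] (i : ι) (a b : ℕ) (r : PB ι) (hr : r ∈ Nv i) (ha : Even a) :
    ss i (X (false, i) ^ (b + 1) * X (true, i) ^ a * r) =
      X (false, i) ^ b * X (true, i) ^ (a + 1) * r := by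
  rw [pol_eq_sum r, Finset.mul_sum, map_sum, Finset.mul_sum]
  refine Finset.sum_congr rfl fun m hm => ?_
  rw [q_mon, q_mon, ss_mon, sMon, if_pos]
  · refine congrArg (fun m => monomial m (1 : ZMod 2)) (Finsupp.ext fun p => ?_)
    simp only [Finsupp.coe_add, Finsupp.coe_tsub, Pi.add_apply, Pi.sub_apply, Finsupp.single_apply]
    split_ifs <;> omega
  · simp [Nv_mon hr hm, Finsupp.single_apply, ha]

lemma ss_mul_zero [DecidableEq ι] (i : ι) (a b : ℕ) (r : PB ι) (hr : r ∈ Nv i) (h : b = 0 ∨ ¬ Even a) :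
    ss i (X (false, i) ^ b * X (true, i) ^ a * r) = 0 := by
  rw [pol_eq_sum r, Finset.mul_sum, map_sum]
  refine Finset.sum_eq_zero fun m hm => ?_
  rw [q_mon, ss_mon, sMon, if_neg]
  simp [Nv_mon hr hm, Finsupp.single_apply]
  rcases h with h | h
  · simp [h]
  · intro _
    simpa using h

lemma dd_pow (i : ι) (a b : ℕ) :
    dd (X (false, i) ^ b * X (true, i) ^ a : PB ι) =
      if Even a then 0 else X (false, i) ^ (b + 1) * X (true, i) ^ (a - 1) := by
  rw [Derivation.leibniz, Derivation.leibniz_pow, Derivation.leibniz_pow, dd_false, dd_true]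
  simp only [smul_zero, add_zero, smul_eq_mul]
  split_ifs with h
  · have : (a : PB ι) = 0 := by
      obtain ⟨c, rfl⟩ := h
      push_cast
      exact two_zero _
    simp [nsmul_eq_mul, this]
  · have : (a : PB ι) = 1 := by
      obtain ⟨c, rfl⟩ := Nat.not_even_iff_odd.1 h
      push_cast
      have := two_zero (c : PB ι)
      linear_combination this
    simp only [nsmul_eq_mul, this]
    ring

lemma homotopy [DecidableEq ι] (i : ι) (p : PB ι) : dd (ss i p) + ss i (dd p) = p + pp i p := by
  rw [pol_eq_sum p]
  simp only [map_sum]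
  rw [← Finset.sum_add_distrib, ← Finset.sum_add_distrib]
  refine Finset.sum_congr rfl fun m _ => ?_
  obtain ⟨m', hm', e⟩ := split_mon i m
  have hp : pp i (monomial m 1) = if m (false, i) = 0 ∧ Even (m (true, i)) then monomial m 1 else 0 := pp_mon i m
  generalize m (false, i) = b at *
  generalize m (true, i) = a at *
  have hr := mon_Nv (i := i) hm'
  rw [hp, e, ← q_mon]
  generalize (monomial m' 1 : PB ι) = r at *
  have hdr := dd_Nv hr
  have hdq := dd_pow (ι := ι) i a b
  by_cases ha : Even a
  · rw [if_pos ha] at hdq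
    rw [Derivation.leibniz, hdq, smul_zero, add_zero, smul_eq_mul]
    rcases b with _ | b
    · rw [ss_mul_zero i a 0 _ hr (Or.inl rfl), ss_mul_zero i a 0 _ hdr (Or.inl rfl), if_pos ⟨rfl, ha⟩,
        two_zero, map_zero, add_zero]
    · rw [ss_mul i a b _ hr ha, ss_mul i a b _ hdr ha, if_neg (by simp), Derivation.leibniz,
        dd_pow i (a + 1) b, if_neg (by simpa [Nat.even_add_one] using ha), smul_eq_mul, smul_eq_mul]
      have := two_zero (X (false, i) ^ b * X (true, i) ^ (a + 1) * dd r)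
      rw [Nat.add_sub_cancel]
      linear_combination this
  · rw [if_neg ha] at hdq
    have ha' : Even (a - 1) := by
      obtain ⟨c, rfl⟩ := Nat.not_even_iff_odd.1 ha
      simp
    rw [Derivation.leibniz, hdq, ss_mul_zero i a b _ hr (Or.inr ha), if_neg (by tauto), map_zero,
      map_add, smul_eq_mul, ss_mul_zero i a b _ hdr (Or.inr ha), smul_eq_mul, mul_comm r,
      ss_mul i _ _ _ hr ha']
    have : a - 1 + 1 = a := by
      rcases a with _ | a
      · simp at ha
      · rfl
    rw [this]; ring

variable [Fintype ι]

abbrev WB (ι : Type u) (c : ℕ × ℕ) : Submodule (ZMod 2) (PB ι) :=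
  weightedHomogeneousSubmodule (ZMod 2) (fun p : Bool × ι => wB p.1) c

lemma wB_mem' {a b : ℕ} {p : PB ι} (hp : p ∈ WB ι (a, b))
    {m} (hm : m ∈ p.support) : ∑ i, m (true, i) = a ∧ ∑ i, m (false, i) = b := by
  have := hp (mem_support_iff.1 hm)
  rw [weight_wB] at this
  simpa using this

lemma mon_mem {c : ℕ × ℕ} {m : (Bool × ι) →₀ ℕ} (r : ZMod 2)
    (h : Finsupp.weight (fun p : Bool × ι => wB p.1) m = c) :
    monomial m r ∈ WB ι c := isWeightedHomogeneous_monomial _ _ _ h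

lemma weight_sub [DecidableEq ι] (m : (Bool × ι) →₀ ℕ) (p : Bool × ι) (h : m p ≠ 0) :
    Finsupp.weight (fun p : Bool × ι => wB p.1) (m - Finsupp.single p 1) + wB p.1 =
    Finsupp.weight (fun p : Bool × ι => wB p.1) m := by
  have e : m = (m - Finsupp.single p 1) + Finsupp.single p 1 := by
    ext q
    simp only [Finsupp.coe_add, Finsupp.coe_tsub, Pi.add_apply, Pi.sub_apply, Finsupp.single_apply]
    split_ifs with hq
    · subst hq; omega
    · omega
  conv_rhs => rw [e, map_add]
  simp [Finsupp.weight_apply]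

lemma ss_mem [DecidableEq ι] (i : ι) {a b : ℕ} {p : PB ι} (hp : p ∈ WB ι (a, b)) :
    ss i p ∈ WB ι (a + 1, b - 1) ∧ (b = 0 → ss i p = 0) := by
  rw [pol_eq_sum p, map_sum]
  have key : ∀ m ∈ p.support, ss i (monomial m 1) ∈ WB ι (a + 1, b - 1) ∧
      (b = 0 → ss i (monomial m 1) = 0) := by
    intro m hm
    rw [ss_mon, sMon]
    have hm' := wB_mem' hp hm
    split_ifs with h
    · have h1 := weight_sub m (false, i) h.1
      have h2 := hp (mem_support_iff.1 hm)
      rw [h2] at h1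
      constructor
      · refine mon_mem _ ?_
        rw [map_add]
        generalize Finsupp.weight (fun p : Bool × ι => wB p.1) (m - _) = c at *
        obtain ⟨c1, c2⟩ := c
        simp [Finsupp.weight_apply, wB] at h1 ⊢
        omega
      · rintro rfl
        simp [wB, Prod.ext_iff] at h1
    · exact ⟨zero_mem _, fun _ => rfl⟩
  exact ⟨Submodule.sum_mem _ fun m hm => (key m hm).1, fun hb =>
    Finset.sum_eq_zero fun m hm => (key m hm).2 hb⟩

lemma dd_mem {a b : ℕ} {p : PB ι} (hp : p ∈ WB ι (a, b)) :
    dd p ∈ WB ι (a - 1, b + 1) ∧ (a = 0 → dd p = 0) := by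
  classical
  rw [pol_eq_sum p, map_sum]
  have key : ∀ m ∈ p.support, dd (monomial m 1 : PB ι) ∈ WB ι (a - 1, b + 1) ∧
      (a = 0 → dd (monomial m 1 : PB ι) = 0) := by
    intro m hm
    have e : dd (monomial m 1 : PB ι) = ∑ q ∈ m.support, monomial (m - Finsupp.single q 1) (m q : ZMod 2) *
        (if q.1 then X (false, q.2) else 0) := by
      rw [dd, mkDerivation_monomial, one_smul]
      rfl
    rw [e]
    have key2 : ∀ q ∈ m.support, (monomial (m - Finsupp.single q 1) (m q : ZMod 2) *
        (if q.1 then X (false, q.2) else 0) : PB ι) ∈ WB ι (a - 1, b + 1) ∧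
        (a = 0 → (monomial (m - Finsupp.single q 1) (m q : ZMod 2) *
        (if q.1 then X (false, q.2) else 0) : PB ι) = 0) := by
      rintro ⟨j, i⟩ hq
      cases j
      · simp
      · have h1 := weight_sub m (true, i) (Finsupp.mem_support_iff.1 hq)
        rw [hp (mem_support_iff.1 hm)] at h1
        constructor
        · have h3 := (isWeightedHomogeneous_monomial (fun p : Bool × ι => wB p.1) _ (m (true, i) : ZMod 2)
            (rfl : Finsupp.weight (fun p : Bool × ι => wB p.1) (m - Finsupp.single (true, i) 1) = _)).mul
            (isWeightedHomogeneous_X (ZMod 2) (fun p : Bool × ι => wB p.1) (false, i))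
          refine (congrArg (_ ∈ WB ι ·) ?_).mp h3
          generalize Finsupp.weight (fun p : Bool × ι => wB p.1) (m - _) = c at *
          obtain ⟨c1, c2⟩ := c
          simp [wB] at h1 ⊢
          omega
        · rintro rfl
          simp [wB, Prod.ext_iff] at h1
    exact ⟨Submodule.sum_mem _ fun m hm => (key2 m hm).1, fun hb =>
      Finset.sum_eq_zero fun m hm => (key2 m hm).2 hb⟩
  exact ⟨Submodule.sum_mem _ fun m hm => (key m hm).1, fun hb =>
    Finset.sum_eq_zero fun m hm => (key m hm).2 hb⟩

/-- all exponents in directions `s` are even and `x`-free -/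
def Good (s : Finset ι) (p : PB ι) : Prop :=
  ∀ m ∈ p.support, ∀ i ∈ s, m (false, i) = 0 ∧ Even (m (true, i))

lemma pp_supp [DecidableEq ι] (i : ι) (p : PB ι) : ∀ m ∈ (pp i p).support,
    m ∈ p.support ∧ m (false, i) = 0 ∧ Even (m (true, i)) := by
  classical
  intro m hm
  have e : pp i p = ∑ m ∈ p.support.filter (fun m => m (false, i) = 0 ∧ Even (m (true, i))),
      monomial m 1 := by
    conv_lhs => rw [pol_eq_sum p, map_sum]
    rw [Finset.sum_filter]
    refine Finset.sum_congr rfl fun m _ => ?_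
    rw [pp_mon, piMon]
  rw [e] at hm
  have h := support_sum hm
  rw [Finset.mem_biUnion] at h
  obtain ⟨m', hm', h⟩ := h
  have : m = m' := by simpa using support_monomial_subset h
  subst this
  simpa using hm'

lemma cycles [DecidableEq ι] {a b : ℕ} {p : PB ι} (hp : p ∈ WB ι (a, b)) (h : dd p = 0) (s : Finset ι) :
    ∃ q : PB ι, (b = 0 → q = 0) ∧ q ∈ WB ι (a + 1, b - 1) ∧ p + dd q ∈ WB ι (a, b) ∧ Good s (p + dd q) := by
  induction s using Finset.induction_on with
  | empty => exact ⟨0, fun _ => rfl, zero_mem _, by simpa using hp, by simp [Good]⟩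
  | insert i s hi ih =>
    obtain ⟨q, h1, h2, h3, h4⟩ := ih
    set p1 := p + dd q
    have hp1 : dd p1 = 0 := by simp [p1, dd_dd, h]
    have e := homotopy i p1
    rw [hp1, map_zero, add_zero] at e
    have e2 : p + dd (q + ss i p1) = pp i p1 := by
      rw [map_add, ← add_assoc, e, ← add_assoc, two_zero, zero_add]
    have hs := ss_mem i h3
    refine ⟨q + ss i p1, fun hb => by rw [h1 hb, hs.2 hb, add_zero], add_mem h2 hs.1, ?_, ?_⟩
    · rw [e2]
      intro m hm
      exact h3 (mem_support_iff.1 (pp_supp i p1 m (mem_support_iff.2 hm)).1)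
    · rw [e2]
      intro m hm j hj
      obtain ⟨h5, h6⟩ := pp_supp i p1 m hm
      rcases Finset.mem_insert.1 hj with rfl | hj
      · exact h6
      · exact h4 m h5 j hj

lemma exact_pos {a b : ℕ} {p : PB ι} (hb : 0 < b) (hp : p ∈ WB ι (a, b)) (h : dd p = 0) :
    ∃ q : PB ι, q ∈ WB ι (a + 1, b - 1) ∧ dd q = p := by
  classical
  obtain ⟨q, -, h2, h3, h4⟩ := cycles hp h Finset.univ
  refine ⟨q, h2, ?_⟩
  have : p + dd q = 0 := by
    rw [← support_eq_empty, Finset.eq_empty_iff_forall_notMem]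
    intro m hm
    have := (wB_mem' h3 hm).2
    rw [Finset.sum_eq_zero fun i _ => (h4 m hm i (Finset.mem_univ i)).1] at this
    omega
  have h5 := two_zero (dd q)
  linear_combination h5 - this

lemma exact_zero {a : ℕ} {p : PB ι} (hp : p ∈ WB ι (a, 0)) (h : dd p = 0) : Good Finset.univ p := by
  classical
  obtain ⟨q, h1, h2, h3, h4⟩ := cycles hp h Finset.univ
  rw [h1 rfl] at h4
  simpa using h4

def halfM (m : (Bool × ι) →₀ ℕ) : (Unit × ι) →₀ ℕ :=
  Finsupp.equivFunOnFinite.symm fun p => m (true, p.2) / 2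

lemma double_half (m : (Bool × ι) →₀ ℕ) (h : ∀ i, m (false, i) = 0 ∧ Even (m (true, i))) :
    2 • (halfM m).mapDomain (fun p : Unit × ι => (true, p.2)) = m := by
  have inj : Function.Injective (fun p : Unit × ι => (true, p.2)) := by
    rintro ⟨_, i⟩ ⟨_, j⟩ h
    simpa using h
  ext ⟨j, i⟩
  cases j
  · rw [(h i).1, Finsupp.smul_apply, Finsupp.mapDomain_of_notMem_range]
    · rfl
    · simp
  · rw [Finsupp.smul_apply]
    have := Finsupp.mapDomain_apply inj (halfM m) ((), i)
    rw [this]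
    have h2 := (h i).2
    simp only [halfM, Finsupp.equivFunOnFinite_symm_apply_apply, smul_eq_mul]
    obtain ⟨c, hc⟩ := h2
    omega

lemma exists_sqrt {a : ℕ} {p : PB ι} (hp : p ∈ WB ι (2 * a, 0)) (h : dd p = 0) :
    ∃ r : MvPolynomial (Unit × ι) (ZMod 2),
      r ∈ weightedHomogeneousSubmodule (ZMod 2) (fun p : Unit × ι => wS p.1) a ∧
      (rename (fun p : Unit × ι => (true, p.2)) r) ^ 2 = p := by
  have hg := exact_zero hp h
  refine ⟨∑ m ∈ p.support, monomial (halfM m) 1, Submodule.sum_mem _ fun m hm => ?_, ?_⟩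
  · refine isWeightedHomogeneous_monomial _ _ _ ?_
    have h1 := (wB_mem' hp hm).1
    have h2 := fun i => (hg m hm i (Finset.mem_univ i)).2
    rw [Finsupp.weight_apply, Finsupp.sum_fintype _ _ (by simp), Fintype.sum_prod_type]
    simp only [halfM, Finsupp.equivFunOnFinite_symm_apply_apply, smul_eq_mul, mul_one]
    simp only [Finset.univ_unique, Finset.sum_const, Finset.card_singleton, one_smul]
    have h3 : 2 * ∑ i, m (true, i) / 2 = 2 * a := by
      rw [← h1, Finset.mul_sum]
      refine Finset.sum_congr rfl fun i _ => ?_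
      obtain ⟨c, hc⟩ := h2 i
      omega
    omega
  · rw [map_sum, sum_pow_char 2]
    conv_rhs => rw [pol_eq_sum p]
    refine Finset.sum_congr rfl fun m hm => ?_
    rw [rename_monomial, monomial_pow, double_half m (fun i => hg m hm i (Finset.mem_univ i)), one_pow]

end koszul

end MacLane

namespace MacLane
universe u v w
set_option autoImplicit false
open MvPolynomial

lemma dd_lin_true {V : FG.{u}} (v : V) : dd (lin (ZMod 2) true v) = lin (ZMod 2) false v := by
  have : (dd : Derivation (ZMod 2) (PB (idx V)) _).toLinearMap ∘ₗ lin (ZMod 2) true = lin (ZMod 2) false := by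
    refine (bas V).ext fun i => ?_
    rw [lin_bas]
    change dd (lin (ZMod 2) true (bas V i)) = _
    rw [lin_bas, dd_true]
  exact LinearMap.congr_fun this v

lemma dd_lin_false {V : FG.{u}} (v : V) : dd (lin (ZMod 2) false v) = 0 := by
  rw [← dd_lin_true, dd_dd]

lemma dd_mapP {V W : FG.{u}} (f : V →ₗ[ZMod 2] W) (p : Pol (ZMod 2) Bool V) :
    dd (mapP f p) = mapP f (dd p) := by
  induction p using MvPolynomial.induction_on with
  | C a =>
    have : mapP f (C a) = (algebraMap (ZMod 2) (Pol (ZMod 2) Bool W) a) := (mapP f).commutes a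
    rw [this, Derivation.map_algebraMap]
    have : dd (C a : Pol (ZMod 2) Bool V) = 0 := Derivation.map_algebraMap _ a
    rw [this, map_zero]
  | add p q hp hq => simp [hp, hq]
  | mul_X p i hp =>
    obtain ⟨j, i⟩ := i
    rw [map_mul, Derivation.leibniz, Derivation.leibniz, hp, map_add, smul_eq_mul, smul_eq_mul,
      smul_eq_mul, smul_eq_mul, map_mul, map_mul]
    congr 2
    rw [← lin_bas (k := ZMod 2), mapP_lin]
    cases j
    · rw [dd_lin_false, dd_lin_false, map_zero]
    · rw [dd_lin_true, dd_lin_true, mapP_lin]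

def dM (a b : ℕ) : Mf.{u} a b ⟶ Mf.{u} (a - 1) (b + 1) :=
  polNat (fun V => (dd : Derivation (ZMod 2) (PB (idx V)) _).toLinearMap.toAddMonoidHom)
    (fun V p hp => (dd_mem hp).1) (fun V W f p => dd_mapP f p)

lemma dM_app (a b : ℕ) (V : FG.{u}) (x : (Mf a b).obj V) :
    toPol (((dM a b).app V).hom x) = dd (toPol x) := rfl

/-- kernel functor -/
def kerF {F G : Fn.{u}} (φ : F ⟶ G) : Fn.{u} :=
  mkFun (fun V => LinearMap.ker (φ.app V).hom)
    (fun {V W} f => (act F f).restrict (p := LinearMap.ker (φ.app V).hom)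
      (q := LinearMap.ker (φ.app W).hom) (fun x hx => by
        rw [LinearMap.mem_ker] at hx ⊢
        rw [nat_act, hx, map_zero]))
    (fun V => LinearMap.ext fun x => Subtype.ext (act_id F _))
    (fun f g => LinearMap.ext fun x => Subtype.ext (act_act F f g _).symm)

def kerι {F G : Fn.{u}} (φ : F ⟶ G) : kerF φ ⟶ F :=
  mkNat (fun V => (LinearMap.ker (φ.app V).hom).subtype) (fun f x => rfl)

lemma kerι_inj {F G : Fn.{u}} (φ : F ⟶ G) (V : FG.{u}) : Function.Injective ((kerι φ).app V).hom :=
  Subtype.val_injective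

lemma kerι_ker {F G : Fn.{u}} (φ : F ⟶ G) (V : FG.{u}) (x : (kerF φ).obj V) :
   (φ.app V).hom (((kerι φ).app V).hom x) = 0 := (show LinearMap.ker (φ.app V).hom from x).2

lemma kerι_range {F G : Fn.{u}} (φ : F ⟶ G) (V : FG.{u}) (x : F.obj V) (hx : (φ.app V).hom x = 0) :
   ∃ y, (((kerι φ).app V).hom y) = x := ⟨(⟨x, hx⟩ : LinearMap.ker (φ.app V).hom), rfl⟩

def kerLift {F G H : Fn.{u}} (φ : F ⟶ G) (ψ : H ⟶ F)
    (h : ∀ V (x : H.obj V), (φ.app V).hom ((ψ.app V).hom x) = 0) : H ⟶ kerF φ :=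
  mkNat (fun V => (LinearMap.codRestrict (LinearMap.ker (φ.app V).hom) (ψ.app V).hom (h V) :
    H.obj V →ₗ[ZMod 2] LinearMap.ker (φ.app V).hom))
    (fun f x => Subtype.ext (nat_act ψ f x))

lemma kerLift_ι {F G H : Fn.{u}} (φ : F ⟶ G) (ψ : H ⟶ F)
    (h : ∀ V (x : H.obj V), (φ.app V).hom ((ψ.app V).hom x) = 0) (V : FG.{u}) (x : H.obj V) :
    ((kerι φ).app V).hom (((kerLift φ ψ h).app V).hom x) = (ψ.app V).hom x := rfl

abbrev Z (a b : ℕ) : Fn.{u} := kerF (dM a b)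

def dZ (a b : ℕ) : Mf.{u} (a + 1) b ⟶ Z.{u} a (b + 1) :=
  kerLift (dM a (b + 1)) (dM (a + 1) b) (fun V x => toPol_inj (dd_dd (toPol x)))

lemma dZ_surj (a b : ℕ) (V : FG.{u}) : Function.Surjective ((dZ a b).app V).hom := by
  intro z
  have h : dd (toPol (((kerι (dM a (b + 1))).app V).hom z)) = 0 :=
    congrArg toPol (kerι_ker (dM a (b + 1)) V z)
  obtain ⟨q, hq, e⟩ := exact_pos (Nat.succ_pos b) (toPol_mem (((kerι (dM a (b + 1))).app V).hom z)) h
  refine ⟨ofPol q hq, ?_⟩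
  refine kerι_inj (dM a (b + 1)) V ?_
  exact toPol_inj e

lemma dZ_exact (a b : ℕ) (V : FG.{u}) (x : (Mf (a + 1) b).obj V) (hx : ((dZ a b).app V).hom x = 0) :
    dd (toPol x) = 0 := by
  have := congrArg ((kerι (dM a (b + 1))).app V).hom hx
  rw [map_zero] at this
  exact congrArg toPol this

section ext
variable [HasExt.{1} Fn.{u}]

lemma shift {A B C : Fn.{u}} (f : A ⟶ B) (g : B ⟶ C) (w : f ≫ g = 0)
    (hS : (ShortComplex.mk f g w).ShortExact) (hB : ∀ n, Subsingleton (E B n)) :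
    Subsingleton (E A 0) ∧ ∀ n, Nonempty (E C n ≃+ E A (n + 1)) := by
  obtain ⟨δ, h1, h2, h3⟩ := les f g w hS
  have : Mono f := hS.mono_f
  refine ⟨(inj_zero f).subsingleton, fun n => ⟨AddEquiv.ofBijective (δ n) ⟨?_, fun x => ?_⟩⟩⟩
  · refine (injective_iff_map_eq_zero _).2 fun x hx => ?_
    obtain ⟨y, rfl⟩ := (h2 n x).1 hx
    rw [Subsingleton.elim y 0, map_zero]
  · exact (h3 n x).1 (Subsingleton.elim _ _)

lemma Z_shift (a b : ℕ) (hb : 0 < b) : Subsingleton (E (Z.{u} (a + 1) b) 0) ∧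
    ∀ n, Nonempty (E (Z.{u} a (b + 1)) n ≃+ E (Z.{u} (a + 1) b) (n + 1)) := by
  have w : kerι (dM (a + 1) b) ≫ dZ.{u} a b = 0 := nat_ext fun V x => by
    refine kerι_inj (dM a (b + 1)) V ?_
    exact kerι_ker (dM (a + 1) b) V x
  refine shift _ _ w (shortExact_of _ _ w (kerι_inj _) (dZ_surj a b) fun V x hx => ?_)
    (vanish_M _ _ (Nat.succ_pos a) hb)
  exact kerι_range _ V x (toPol_inj (dZ_exact a b V x hx))

lemma Z_zero (b : ℕ) : Nonempty (Z.{u} 0 b ≅ Mf.{u} 0 b) := by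
  have h : ∀ V (x : (Mf.{u} 0 b).obj V), ((dM 0 b).app V).hom x = 0 := fun V x =>
    toPol_inj ((dd_mem (toPol_mem x)).2 rfl)
  exact ⟨{ hom := kerι _
           inv := kerLift (dM 0 b) (𝟙 _) h
           hom_inv_id := nat_ext fun V x => rfl
           inv_hom_id := nat_ext fun V x => rfl }⟩
end ext

/-- degree concentrated on one side -/
def jn (j : Bool) (n : ℕ) : ℕ × ℕ := if j then (n, 0) else (0, n)

lemma weighted_map {k : Type*} [CommRing k] {σ M M' : Type*} [AddCommMonoid M] [AddCommMonoid M'] (φ : M →+ M') {w : σ → M}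
    {p : MvPolynomial σ k} {c : M} (h : IsWeightedHomogeneous w p c) :
    IsWeightedHomogeneous (fun i => φ (w i)) p (φ c) := by
  intro m hm
  rw [← h hm, Finsupp.weight_apply, Finsupp.weight_apply, map_finsuppSum]
  simp

def jhom (j : Bool) : ℕ →+ ℕ × ℕ := if j then AddMonoidHom.inl ℕ ℕ else AddMonoidHom.inr ℕ ℕ

lemma jhom_apply (j : Bool) (n : ℕ) : jhom j n = jn j n := by cases j <;> rfl

lemma wB_eq (j : Bool) : wB j = jn j 1 := by cases j <;> rfl

def inS (j : Bool) (V : FG.{u}) : Pol (ZMod 2) Unit V →ₐ[ZMod 2] Pol (ZMod 2) Bool V :=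
  liftP fun _ => lin (ZMod 2) j

def outS (V : FG.{u}) : Pol (ZMod 2) Bool V →ₐ[ZMod 2] Pol (ZMod 2) Unit V :=
  liftP fun _ => lin (ZMod 2) ()

lemma outS_inS (j : Bool) (V : FG.{u}) (p : Pol (ZMod 2) Unit V) : outS V (inS j V p) = p := by
  have : (outS V).comp (inS j V) = AlgHom.id _ _ := pol_hom_ext fun j v => by simp [inS, outS]
  exact AlgHom.congr_fun this p

lemma lift_congr {A : Type*} [CommRing A] [Algebra (ZMod 2) A] {V : FG.{u}} (j : Bool) (n : ℕ)
    (g g' : Bool → (V →ₗ[ZMod 2] A)) (hg : g j = g' j) (p : Pol (ZMod 2) Bool V)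
    (hp : p ∈ polSub wB (jn j n) V) : liftP (k := ZMod 2) g p = liftP (k := ZMod 2) g' p := by
  rw [liftP, liftP, aeval_def, aeval_def, eval₂_eq, eval₂_eq]
  refine Finset.sum_congr rfl fun m hm => ?_
  congr 1
  refine Finset.prod_congr rfl fun ⟨j', i⟩ hi => ?_
  have : j' = j := by
    by_contra hne
    have hi' := Finsupp.mem_support_iff.1 hi
    have hz : ∑ i, m (j', i) = 0 := by
      cases j
      · obtain rfl : j' = true := by simpa using hne
        exact (wB_mem hp hm).1
      · obtain rfl : j' = false := by simpa using hne
        exact (wB_mem hp hm).2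
    exact hi' (Finset.sum_eq_zero_iff.1 hz i (Finset.mem_univ i))
  subst this
  rw [hg]

lemma inS_outS (j : Bool) (n : ℕ) (V : FG.{u}) (p : Pol (ZMod 2) Bool V)
    (hp : p ∈ polSub wB (jn j n) V) : inS j V (outS V p) = p := by
  have : (inS j V).comp (outS V) = liftP (fun _ => lin (ZMod 2) j) :=
    pol_hom_ext fun j v => by simp [inS, outS]
  have h2 : liftP (fun j => lin (ZMod 2) j) = AlgHom.id (ZMod 2) (Pol (ZMod 2) Bool V) :=
    pol_hom_ext fun j v => by simp
  calc inS j V (outS V p) = liftP (k := ZMod 2) (fun _ => lin (ZMod 2) j) p := AlgHom.congr_fun this p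
    _ = liftP (k := ZMod 2) (fun j => lin (ZMod 2) j) p :=
      lift_congr j n (fun _ => lin (ZMod 2) j) (fun j => lin (ZMod 2) j) rfl p hp
    _ = p := by rw [h2]; rfl

lemma inS_mem (j : Bool) (n : ℕ) (V : FG.{u}) (p : Pol (ZMod 2) Unit V) (hp : p ∈ polSub wS n V) :
    inS j V p ∈ polSub wB (jn j n) V := by
  have h : IsWeightedHomogeneous (fun p : Unit × idx V => jhom j (wS p.1)) p (jhom j n) :=
    weighted_map (w := fun p : Unit × idx V => wS p.1) (jhom j) hp
  rw [jhom_apply] at h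
  exact liftP_weighted (k := ZMod 2) (w := fun x : Unit => jhom j (wS x)) (w' := wB)
    (fun _ => lin (ZMod 2) j) (fun _ v => by
      rw [jhom_apply, ← wB_eq]
      exact lin_weighted wB j v) _ p h

def sumHom : (ℕ × ℕ) →+ ℕ := AddMonoidHom.coprod (AddMonoidHom.id ℕ) (AddMonoidHom.id ℕ)

lemma outS_mem (j : Bool) (n : ℕ) (V : FG.{u}) (p : Pol (ZMod 2) Bool V)
    (hp : p ∈ polSub wB (jn j n) V) : outS V p ∈ polSub wS n V := by
  have h : IsWeightedHomogeneous (fun p : Bool × idx V => sumHom (wB p.1)) p (sumHom (jn j n)) :=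
    weighted_map (w := fun p : Bool × idx V => wB p.1) sumHom hp
  have e : sumHom (jn j n) = n := by
    cases j <;> simp [jn, sumHom]
  rw [e] at h
  exact liftP_weighted (k := ZMod 2) (w := fun j : Bool => sumHom (wB j)) (w' := wS)
    (fun _ => lin (ZMod 2) ()) (fun j v => by
      have : sumHom (wB j) = 1 := by
        cases j <;> simp [wB, sumHom]
      rw [this]
      exact lin_weighted wS () v) _ p h

def SIn (j : Bool) (n : ℕ) : S.{u} n ⟶ polyF.{u} wB (jn j n) :=
  polNat (fun V => (inS j V).toLinearMap.toAddMonoidHom) (fun V p hp => inS_mem j n V p hp)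
    (fun V W f p => by
    have : (inS j W).comp (mapP f) = (mapP f).comp (inS j V) := pol_hom_ext fun j v => by simp [inS]
    exact AlgHom.congr_fun this p)

def SOut (j : Bool) (n : ℕ) : polyF.{u} wB (jn j n) ⟶ S.{u} n :=
  polNat (fun V => (outS V).toLinearMap.toAddMonoidHom) (fun V p hp => outS_mem j n V p hp)
   (fun V W f p => by
    have : (outS W).comp (mapP f) = (mapP f).comp (outS V) := pol_hom_ext fun j v => by simp [outS]
    exact AlgHom.congr_fun this p)

lemma SIn_app (j : Bool) (n : ℕ) (V : FG.{u}) (x : (S n).obj V) :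
    toPol (((SIn j n).app V).hom x) = inS j V (toPol x) := rfl

lemma SOut_app (j : Bool) (n : ℕ) (V : FG.{u}) (x : (polyF wB (jn j n)).obj V) :
    toPol (((SOut j n).app V).hom x) = outS V (toPol x) := rfl

def SIso (j : Bool) (n : ℕ) : S.{u} n ≅ polyF.{u} wB (jn j n) where
  hom := SIn j n
  inv := SOut j n
  hom_inv_id := nat_ext fun V x => toPol_inj (outS_inS j V (toPol x))
  inv_hom_id := nat_ext fun V x => toPol_inj (inS_outS j n V _ (toPol_mem x))

/-- Frobenius -/
def Frob (m n j : ℕ) (h : n = m * 2 ^ j) : S.{u} m ⟶ S.{u} n :=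
  polNat (fun V => (iterateFrobenius (Pol (ZMod 2) Unit V) 2 j : _ →+ _))
    (fun V p hp => by
      have := IsWeightedHomogeneous.pow hp (2 ^ j)
      rw [h, mul_comm m]
      exact this)
    (fun V W f p => by
      change (mapP f p) ^ (2 ^ j) = mapP f (p ^ 2 ^ j)
      rw [map_pow])

lemma Frob_app (m n j : ℕ) (h : n = m * 2 ^ j) (V : FG.{u}) (x : (S m).obj V) :
    toPol (((Frob m n j h).app V).hom x) = toPol x ^ (2 ^ j) := rfl

lemma Frob_comp (m n l i j : ℕ) (h : n = m * 2 ^ i) (h' : l = n * 2 ^ j) (h'' : l = m * 2 ^ (i + j)) :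
    Frob.{u} m n i h ≫ Frob n l j h' = Frob m l (i + j) h'' := nat_ext fun V x => toPol_inj (by
  change (toPol x ^ 2 ^ i) ^ 2 ^ j = toPol x ^ 2 ^ (i + j)
  rw [← pow_mul, pow_add])

section ext
variable [HasExt.{1} Fn.{u}]

lemma Z_ext (a : ℕ) : ∀ b, 0 < b → (∀ i < a, Subsingleton (E (Z.{u} a b) i)) ∧
    ∀ i, Nonempty (E (S.{u} (a + b)) i ≃+ E (Z.{u} a b) (i + a)) := by
  induction a with
  | zero =>
    intro b hb
    refine ⟨by simp, fun i => ?_⟩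
    obtain ⟨e⟩ := Z_zero.{u} b
    rw [zero_add]
    exact ⟨Eiso (SIso false b ≪≫ e.symm) i⟩
  | succ a ih =>
    intro b hb
    obtain ⟨h1, h2⟩ := Z_shift.{u} a b hb
    obtain ⟨h3, h4⟩ := ih (b + 1) (Nat.succ_pos b)
    refine ⟨fun i hi => ?_, fun i => ?_⟩
    · rcases i with _ | i
      · exact h1
      · have := h3 i (by omega)
        obtain ⟨e⟩ := h2 i
        exact e.symm.toEquiv.subsingleton
    · obtain ⟨e⟩ := h4 i
      obtain ⟨e'⟩ := h2 (i + a)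
      have : a + 1 + b = a + (b + 1) := by omega
      rw [this]
      exact ⟨e.trans e'⟩

end ext

def gS (a : ℕ) : S.{u} (a + 1) ⟶ Z.{u} a 1 := (SIn true (a + 1) : S (a + 1) ⟶ Mf (a + 1) 0) ≫ dZ a 0

lemma gS_app (a : ℕ) (V : FG.{u}) (x : (S (a + 1)).obj V) :
    ((gS a).app V).hom x = ((dZ a 0).app V).hom (((SIn true (a + 1)).app V).hom x) := rfl

lemma gS_toPol (a : ℕ) (V : FG.{u}) (x : (S (a + 1)).obj V) :
    toPol (((kerι (dM a 1)).app V).hom (((gS a).app V).hom x)) = dd (inS true V (toPol x)) := by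
  rw [gS_app]
  exact (dM_app (a + 1) 0 V _).trans rfl

lemma gS_surj (a : ℕ) (V : FG.{u}) : Function.Surjective ((gS a).app V).hom := fun z => by
  obtain ⟨q, hq⟩ := dZ_surj a 0 V z
  refine ⟨((SOut true (a + 1)).app V).hom q, ?_⟩
  rw [gS_app, ← hq]
  refine congrArg ((dZ a 0).app V).hom ?_
  exact toPol_inj (inS_outS true (a + 1) V _ (toPol_mem q))

lemma inS_rename (V : FG.{u}) (r : Pol (ZMod 2) Unit V) :
      rename (fun p : Unit × idx V => (true, p.2)) r = inS true V r := by
  have : rename (fun p : Unit × idx V => (true, p.2)) = inS true V := by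
    refine MvPolynomial.algHom_ext fun p => ?_
    rw [rename_X, inS, liftP_X, lin_bas]
  rw [this]

lemma gS_exact (a m : ℕ) (h : a + 1 = 2 * m) (V : FG.{u}) (x : (S (a + 1)).obj V)
    (hx : ((gS a).app V).hom x = 0) : ∃ r ∈ polSub wS m V, r ^ 2 = toPol x := by
  have h1 : dd (inS true V (toPol x)) = 0 := by
    rw [← gS_toPol, hx, map_zero]; rfl
  have h2 : inS true V (toPol x) ∈ WB (idx V) (2 * m, 0) := by
    have := inS_mem true (2 * m) V (toPol x) (h ▸ toPol_mem x)
    exact this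
  obtain ⟨r, hr, e⟩ := exists_sqrt h2 h1
  rw [inS_rename, ← map_pow] at e
  refine ⟨r, hr, ?_⟩
  rw [← outS_inS true V (r ^ 2), e, outS_inS]

lemma Frob_gS (a m : ℕ) (h : a + 1 = m * 2 ^ 1) : Frob.{u} m (a + 1) 1 h ≫ gS a = 0 := by
  refine nat_ext fun V x => kerι_inj (dM a 1) V (toPol_inj ?_)
  refine (gS_toPol a V (((Frob m (a + 1) 1 h).app V).hom x)).trans ?_
  rw [Frob_app, map_pow, Derivation.leibniz_pow, pow_one, two_nsmul, two_zero]
  exact (congrArg toPol (map_zero ((kerι (dM a 1)).app V).hom)).symm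

lemma Frob_inj (m n j : ℕ) (h : n = m * 2 ^ j) (V : FG.{u}) :
    Function.Injective ((Frob m n j h).app V).hom := fun x y e => by
  have : toPol x ^ 2 ^ j = toPol y ^ 2 ^ j := congrArg toPol e
  exact toPol_inj (iterateFrobenius_inj _ 2 j this)

section ext
variable [HasExt.{1} Fn.{u}]

/-- The main exact sequence. -/
lemma main_ses (m n : ℕ) (hn : n = m * 2 ^ 1) (hm : 0 < m) :
    ∃ (C : Fn.{u}) (g : S.{u} n ⟶ C) (w : Frob m n 1 hn ≫ g = 0),
      (ShortComplex.mk _ _ w).ShortExact ∧ (∀ i < n - 1, Subsingleton (E C i)) ∧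
      ∀ i, Nonempty (E (S.{u} n) i ≃+ E C (i + (n - 1))) := by
  obtain ⟨a, rfl⟩ : ∃ a, n = a + 1 := ⟨n - 1, by omega⟩
  refine ⟨Z a 1, gS a, Frob_gS a m hn, ?_, Z_ext a 1 one_pos⟩
  refine shortExact_of _ _ _ (Frob_inj _ _ _ _) (gS_surj a) (fun V b hb => ?_)
  obtain ⟨r, hr, e⟩ := gS_exact a m (by omega) V b hb
  exact ⟨ofPol r hr, toPol_inj e⟩

end ext

end MacLane

namespace MacLane
universe u v w
set_option autoImplicit false
open MvPolynomial

section pc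
/-- binary digit sum -/
def pc (n : ℕ) : ℕ := (Nat.digits 2 n).sum

lemma pc_zero : pc 0 = 0 := by simp [pc]

lemma pc_rec (n : ℕ) : pc n = n % 2 + pc (n / 2) := by
  rcases Nat.eq_zero_or_pos n with rfl | h
  · simp [pc]
  · unfold pc
    rw [Nat.digits_def' (by norm_num) h]
    simp

lemma pc_add (n : ℕ) : ∀ a b, a + b ≤ n → pc (a + b) ≤ pc a + pc b := by
  induction n with
  | zero =>
    intro a b h
    obtain rfl : a = 0 := by omega
    obtain rfl : b = 0 := by omega
    simp
  | succ n ih =>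
    intro a b h
    rcases Nat.eq_zero_or_pos a with rfl | ha
    · simp [pc_zero]
    rcases Nat.eq_zero_or_pos b with rfl | hb
    · simp [pc_zero]
    have p1 : pc 1 = 1 := by simp [pc]
    rw [pc_rec (a + b), pc_rec a, pc_rec b]
    by_cases h1 : a % 2 = 1 ∧ b % 2 = 1
    · have e : (a + b) / 2 = a / 2 + (b / 2 + 1) := by omega
      have e2 : (a + b) % 2 = 0 := by omega
      have i1 := ih (a / 2) (b / 2 + 1) (by omega)
      have i2 := ih (b / 2) 1 (by omega)
      rw [e, e2, h1.1, h1.2]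
      omega
    · have e : (a + b) / 2 = a / 2 + b / 2 := by omega
      have e2 : (a + b) % 2 ≤ a % 2 + b % 2 := by omega
      have i1 := ih (a / 2) (b / 2) (by omega)
      rw [e]
      omega

lemma pc_add_le (a b : ℕ) : pc (a + b) ≤ pc a + pc b := pc_add _ a b le_rfl

lemma pc_pow (a : ℕ) : pc (2 ^ a) = 1 := by
  induction a with
  | zero => simp [pc]
  | succ a ih => rw [pc_rec, pow_succ]; simp [ih]

lemma pc_pred (c : ℕ) : pc (2 ^ c - 1) = c := by
  induction c with
  | zero => simp [pc]
  | succ c ih =>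
    have := Nat.one_le_two_pow (n := c)
    rw [pc_rec]
    have e1 : (2 ^ (c + 1) - 1) % 2 = 1 := by omega
    have e2 : (2 ^ (c + 1) - 1) / 2 = 2 ^ c - 1 := by omega
    rw [e1, e2, ih]; omega
end pc

section fil
variable {k : Type*} [CommRing k] {σ τ : Type*}

/-- filtered evaluation -/
lemma aeval_fil {A : Type*} [CommRing A] [Algebra k A] (Fil : ℕ → Submodule k A)
    (mono : Monotone Fil) (one : (1 : A) ∈ Fil 0)
    (mul : ∀ s t a b, a ∈ Fil s → b ∈ Fil t → a * b ∈ Fil (s + t))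
    (f : σ → A) (hf : ∀ i, f i ∈ Fil 1) (d : ℕ) (p : MvPolynomial σ k) (hp : p.totalDegree ≤ d) :
    aeval f p ∈ Fil d := by
  have hpow : ∀ i n, f i ^ n ∈ Fil n := by
    intro i n
    induction n with
    | zero => simpa using one
    | succ n ih => rw [pow_succ]; exact mul _ _ _ _ ih (hf i)
  have hprod : ∀ (s : Finset σ) (m : σ → ℕ), ∏ i ∈ s, f i ^ m i ∈ Fil (∑ i ∈ s, m i) := by
    classical
    intro s m
    induction s using Finset.induction_on with
    | empty => simpa using one
    | insert a s ha ih =>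
      rw [Finset.prod_insert ha, Finset.sum_insert ha]
      exact mul _ _ _ _ (hpow _ _) ih
  rw [aeval_def, eval₂_eq]
  refine Submodule.sum_mem _ fun m hm => ?_
  rw [← Algebra.smul_def]
  refine Submodule.smul_mem _ _ (mono ?_ (hprod _ _))
  exact (le_totalDegree hm).trans hp

def filDeg (k : Type*) [CommRing k] (P : ℕ → ℕ → Prop) (σ : Type*) (t : ℕ) :
    Submodule k (MvPolynomial σ k) where
  carrier := {q | ∀ m, coeff m q ≠ 0 → P t m.degree}
  zero_mem' := by simp
  add_mem' {a b} ha hb m hm := by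
    by_cases h : coeff m a = 0
    · refine hb m fun h' => hm ?_
      simp [h, h']
    · exact ha m h
  smul_mem' c a ha m hm := by
    refine ha m fun h => hm ?_
    simp [h]

lemma filDeg_mul {P : ℕ → ℕ → Prop} (hP : ∀ s t a b, P s a → P t b → P (s + t) (a + b))
    (s t : ℕ) (a b : MvPolynomial σ k) (ha : a ∈ filDeg k P σ s) (hb : b ∈ filDeg k P σ t) :
    a * b ∈ filDeg k P σ (s + t) := by
  classical
  intro m hm
  rw [coeff_mul] at hm
  obtain ⟨⟨x, y⟩, hxy, hne⟩ := Finset.exists_ne_zero_of_sum_ne_zero hm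
  rw [Finset.HasAntidiagonal.mem_antidiagonal] at hxy
  simp only at hxy hne
  rw [← hxy, map_add]
  exact hP _ _ _ _ (ha x (left_ne_zero_of_mul hne)) (hb y (right_ne_zero_of_mul hne))

lemma filDeg_one {P : ℕ → ℕ → Prop} (h : P 0 0) : (1 : MvPolynomial σ k) ∈ filDeg k P σ 0 := by
  classical
  intro m hm
  rw [coeff_one] at hm
  have : m = 0 := by
    by_contra h; exact hm (if_neg (Ne.symm h))
  subst this
  simpa using h

lemma filDeg_mono {P : ℕ → ℕ → Prop} (h : ∀ s t a, s ≤ t → P s a → P t a) :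
    Monotone (filDeg k P σ) := fun s t hst a ha m hm => h s t _ hst (ha m hm)

lemma mem_filDeg_le (t : ℕ) (q : MvPolynomial σ k) :
    q ∈ filDeg k (fun t n => n ≤ t) σ t ↔ q.totalDegree ≤ t := by
  constructor
  · intro h
    exact Finset.sup_le fun m hm => h m (mem_support_iff.1 hm)
  · intro h m hm
    exact (le_totalDegree (mem_support_iff.2 hm)).trans h


lemma weight_one (m : σ →₀ ℕ) : Finsupp.weight (1 : σ → ℕ) m = m.degree := by
  rw [Finsupp.degree_eq_weight_one]; rfl

/-- leading forms -/
def LF (c : ℕ) (a a' : MvPolynomial σ k) : Prop :=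
  (∀ m : σ →₀ ℕ, c ≤ m.degree → coeff m a = coeff m a') ∧
  (∀ m : σ →₀ ℕ, c < m.degree → coeff m a' = 0)

lemma LF_mul {c e : ℕ} {a a' b b' : MvPolynomial σ k} (ha : LF c a a') (hb : LF e b b') :
    LF (c + e) (a * b) (a' * b') := by
  classical
  refine ⟨fun m hm => ?_, fun m hm => ?_⟩
  · rw [coeff_mul, coeff_mul]
    refine Finset.sum_congr rfl fun ⟨x, y⟩ hxy => ?_
    rw [Finset.HasAntidiagonal.mem_antidiagonal] at hxy
    simp only at hxy ⊢
    rw [← hxy, map_add] at hm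
    by_cases h1 : c ≤ x.degree
    · by_cases h2 : e ≤ y.degree
      · rw [ha.1 x h1, hb.1 y h2]
      · rw [ha.1 x h1, ha.2 x (by omega), zero_mul, zero_mul]
    · rw [hb.1 y (by omega), hb.2 y (by omega), mul_zero, mul_zero]
  · rw [coeff_mul]
    refine Finset.sum_eq_zero fun ⟨x, y⟩ hxy => ?_
    rw [Finset.HasAntidiagonal.mem_antidiagonal] at hxy
    simp only at hxy ⊢
    rw [← hxy, map_add] at hm
    by_cases h1 : c < x.degree
    · rw [ha.2 x h1, zero_mul]
    · rw [hb.2 y (by omega), mul_zero]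

lemma LF_one : LF 0 (1 : MvPolynomial σ k) 1 := by
  classical
  refine ⟨fun _ _ => rfl, fun m hm => ?_⟩
  rw [coeff_one, if_neg]
  rintro rfl
  simp at hm

lemma LF_pow {c : ℕ} {a a' : MvPolynomial σ k} (ha : LF c a a') (n : ℕ) :
    LF (n * c) (a ^ n) (a' ^ n) := by
  induction n with
  | zero => simpa using LF_one
  | succ n ih =>
    rw [pow_succ, pow_succ, Nat.succ_mul]
    exact LF_mul ih ha

lemma LF_prod {ι : Type*} (s : Finset ι) {c : ι → ℕ} {a a' : ι → MvPolynomial σ k}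
    (h : ∀ i, LF (c i) (a i) (a' i)) : LF (∑ i ∈ s, c i) (∏ i ∈ s, a i) (∏ i ∈ s, a' i) := by
  classical
  induction s using Finset.induction_on with
  | empty => simpa using LF_one
  | insert i s hi ih =>
    rw [Finset.prod_insert hi, Finset.prod_insert hi, Finset.sum_insert hi]
    exact LF_mul (h i) ih

lemma LF_sum {ι : Type*} (s : Finset ι) {c : ℕ} {a a' : ι → MvPolynomial σ k}
    (h : ∀ i ∈ s, LF c (a i) (a' i)) : LF c (∑ i ∈ s, a i) (∑ i ∈ s, a' i) := by
  refine ⟨fun m hm => ?_, fun m hm => ?_⟩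
  · rw [coeff_sum, coeff_sum]
    exact Finset.sum_congr rfl fun i hi => (h i hi).1 m hm
  · rw [coeff_sum]
    exact Finset.sum_eq_zero fun i hi => (h i hi).2 m hm

lemma LF_C_mul {c : ℕ} {a a' : MvPolynomial σ k} (r : k) (ha : LF c a a') :
    LF c (C r * a) (C r * a') := by
  refine ⟨fun m hm => ?_, fun m hm => ?_⟩
  · rw [coeff_C_mul, coeff_C_mul, ha.1 m hm]
  · rw [coeff_C_mul, ha.2 m hm, mul_zero]

lemma LF_aeval {A d : ℕ} {f f' : σ → MvPolynomial τ k} (h : ∀ i, LF A (f i) (f' i))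
    (p : MvPolynomial σ k) (hp : p.IsHomogeneous d) : LF (d * A) (aeval f p) (aeval f' p) := by
  rw [aeval_def, aeval_def, eval₂_eq, eval₂_eq]
  refine LF_sum _ fun m hm => LF_C_mul _ ?_
  have : m.degree = d := by
    have := hp (mem_support_iff.1 hm)
    rwa [weight_one] at this
  have e : d * A = ∑ i ∈ m.support, m i * A := by
    rw [← this, Finsupp.degree_apply, Finset.sum_mul]
  rw [e]
  exact LF_prod _ fun i => LF_pow (h i) _

lemma LF_hc {c : ℕ} {a a' : MvPolynomial σ k} (h : LF c a a') (h' : a'.IsHomogeneous c) :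
    homogeneousComponent c a = a' := by
  ext m
  rw [coeff_homogeneousComponent]
  split_ifs with hm
  · exact h.1 m hm.ge
  · by_contra hne
    have := h' (Ne.symm hne)
    rw [weight_one] at this
    exact hm this

end fil

section frob
variable {κ : Type*} [Field κ] [CharP κ 2] [Algebra (ZMod 2) κ] {σ : Type*}

/-- the additive polynomial -/
def ell (A : Type*) [CommRing A] [CharP A 2] (r k : ℕ) : A →+ A :=
  ∑ a ∈ Finset.range (k + 1), (iterateFrobenius A 2 (r * a) : A →+ A)

lemma ell_apply {A : Type*} [CommRing A] [CharP A 2] (r k : ℕ) (x : A) :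
    ell A r k x = ∑ a ∈ Finset.range (k + 1), x ^ (2 ^ (r * a)) := by
  rw [ell, AddMonoidHom.finsetSum_apply]
  rfl

lemma ell_tel {A : Type*} [CommRing A] [CharP A 2] (r k : ℕ) (x : A) :
    (ell A r k x) ^ (2 ^ r) - ell A r k x = x ^ (2 ^ (r * (k + 1))) - x := by
  have : (ell A r k x) ^ (2 ^ r) = ∑ a ∈ Finset.range (k + 1), x ^ (2 ^ (r * (a + 1))) := by
    rw [ell_apply]
    have := map_sum (iterateFrobenius A 2 r) (fun a => x ^ (2 ^ (r * a))) (Finset.range (k + 1))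
    simp only [iterateFrobenius_def] at this
    rw [this]
    refine Finset.sum_congr rfl fun a _ => ?_
    rw [← pow_mul, ← pow_add, mul_add, mul_one]
  rw [this, ell_apply, ← Finset.sum_sub_distrib,
    Finset.sum_range_sub (fun a => x ^ (2 ^ (r * a)))]
  simp

def Lk (κ : Type*) [Field κ] [CharP κ 2] (σ : Type*) (r k : ℕ) :
    MvPolynomial σ κ →ₐ[κ] MvPolynomial σ κ := aeval fun i => ell _ r k (X i)

lemma Lk_pc (r k d : ℕ) (p : MvPolynomial σ κ) (hp : p.totalDegree ≤ d) (m : σ →₀ ℕ)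
    (hm : d < pc m.degree) : coeff m (Lk κ σ r k p) = 0 := by
  have key := aeval_fil (filDeg κ (fun t n => pc n ≤ t) σ)
    (filDeg_mono fun s t a h h' => h'.trans h) (filDeg_one (by simp [pc_zero]))
    (filDeg_mul fun s t a b h h' => (pc_add_le a b).trans (add_le_add h h'))
    (fun i => ell _ r k (X i)) (fun i => ?_) d p hp
  · by_contra hne
    have := key m hne
    omega
  · rw [ell_apply]
    refine Submodule.sum_mem _ fun a _ m hm => ?_
    rw [X_pow_eq_monomial] at hm
    classical
    rw [coeff_monomial] at hm
    have : Finsupp.single i (2 ^ (r * a)) = m := by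
      by_contra h; exact hm (if_neg h)
    rw [← this, Finsupp.degree_single, pc_pow]

/-- Relations are killed. -/
lemma Lk_rel [Fintype κ] [Finite σ] (r k d N : ℕ) (hκ : Fintype.card κ = 2 ^ r)
    (hN : 0 < N) (hN1 : N < 2 ^ (r * (k + 1))) (hd : d < pc (N - 1))
    (p : MvPolynomial σ κ) (hp : p.totalDegree ≤ d) (h0 : ∀ x : σ → κ, eval x p = 0) :
    homogeneousComponent N (Lk κ σ r k p) = 0 := by
  classical
  obtain ⟨h, h1, h2⟩ := combinatorial_nullstellensatz_exists_linearCombination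
    (fun _ : σ => (Finset.univ : Finset κ)) (fun _ => ⟨0, Finset.mem_univ _⟩) p (fun x _ => h0 x)
  have hP : ∀ i : σ, ∏ s : κ, (X i - C s : MvPolynomial σ κ) = X i ^ (2 ^ r) - X i := by
    intro i
    have hdg := FiniteField.X_pow_card_sub_X_natDegree_eq κ (Fintype.one_lt_card (α := κ))
    have hr := FiniteField.roots_X_pow_card_sub_X κ
    have e := Polynomial.prod_multiset_X_sub_C_of_monic_of_roots_card_eq
      (p := (Polynomial.X ^ Fintype.card κ - Polynomial.X : Polynomial κ))
      (Polynomial.monic_X_pow_sub (by rw [Polynomial.degree_X]; exact_mod_cast Fintype.one_lt_card))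
      (by rw [hr, hdg]; rfl)
    rw [hr] at e
    have e' : ∏ s : κ, (Polynomial.X - Polynomial.C s) = Polynomial.X ^ Fintype.card κ - Polynomial.X := e
    have := congrArg (Polynomial.aeval (X i : MvPolynomial σ κ)) e'
    rw [map_prod] at this
    simpa [hκ] using this
  ext m
  rw [coeff_homogeneousComponent, coeff_zero]
  split_ifs with hm
  swap
  · rfl
  rw [h2, Finsupp.linearCombination_apply, Finsupp.sum, map_sum, coeff_sum]
  refine Finset.sum_eq_zero fun i _ => ?_
  have e : Lk κ σ r k (X i ^ (2 ^ r) - X i) = X i ^ (2 ^ (r * (k + 1))) - X i := by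
    rw [map_sub, map_pow, Lk, aeval_X, ell_tel]
  have hne : (X i ^ (2 ^ r) - X i : MvPolynomial σ κ) ≠ 0 := by
    rw [← hP]
    exact Finset.prod_ne_zero_iff.2 fun s _ h => by
      have := congrArg (eval (fun _ => s + 1)) h
      simp at this
  have hdeg : (h i).totalDegree ≤ d := by
    by_cases hz : h i = 0
    · simp [hz]
    · have := h1 i
      rw [hP, totalDegree_mul_of_isDomain hne hz] at this
      omega
  rw [smul_eq_mul, hP, map_mul, e, mul_sub, coeff_sub, X_pow_eq_monomial,
    coeff_mul_monomial', coeff_mul_X']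
  have hle : m i ≤ N := by
    rw [← hm]; exact Finsupp.le_degree i m
  rw [if_neg (fun hs => by
    have := hs i
    rw [Finsupp.single_eq_same] at this
    omega), zero_sub, neg_eq_zero]
  split_ifs with him
  · refine Lk_pc r k d _ hdeg _ ?_
    have : (m - Finsupp.single i 1).degree = N - 1 := by
      have : (m - Finsupp.single i 1) + Finsupp.single i 1 = m := by
        refine Finsupp.sub_add_single_one_cancel (Finsupp.mem_support_iff.1 him)
      have := congrArg Finsupp.degree this
      rw [map_add, Finsupp.degree_single, hm] at this
      omega
    rw [this]; exact hd
  · rfl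

lemma ell_LF (r k : ℕ) (hr : 0 < r) (i : σ) :
    LF (2 ^ (r * k)) (ell (MvPolynomial σ κ) r k (X i)) (X i ^ (2 ^ (r * k))) := by
  classical
  have hmon : ∀ n : ℕ, ∀ m : σ →₀ ℕ, n ≠ m.degree → coeff m (X i ^ n : MvPolynomial σ κ) = 0 := by
    intro n m h
    rw [X_pow_eq_monomial, coeff_monomial, if_neg]
    rintro rfl
    simp at h
  refine ⟨fun m hm => ?_, fun m hm => hmon _ _ (by omega)⟩
  rw [ell_apply, Finset.sum_range_succ, coeff_add, coeff_sum, Finset.sum_eq_zero, zero_add]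
  intro a ha
  refine hmon _ _ (ne_of_lt (lt_of_lt_of_le ?_ hm))
  exact Nat.pow_lt_pow_right (by norm_num) (Nat.mul_lt_mul_of_pos_left (Finset.mem_range.1 ha) hr)

lemma Lk_top (r k d : ℕ) (hr : 0 < r) (p : MvPolynomial σ κ) (hp : p.IsHomogeneous d) :
    homogeneousComponent (d * 2 ^ (r * k)) (Lk κ σ r k p) = expand (2 ^ (r * k)) p := by
  refine LF_hc (LF_aeval (f' := fun i => X i ^ (2 ^ (r * k))) (fun i => ell_LF r k hr i) p hp) ?_
  have := aeval_weighted (k := κ) (w₁ := fun _ : σ => 2 ^ (r * k)) (w₂ := (1 : σ → ℕ))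
    (fun i => X i ^ (2 ^ (r * k))) (fun i => by
      have := isHomogeneous_X_pow (R := κ) i (2 ^ (r * k))
      exact this) p (d * 2 ^ (r * k)) ?_
  · exact this
  · intro m hm
    have := hp hm
    rw [← this, Finsupp.weight_apply, Finsupp.weight_apply, Finsupp.sum, Finsupp.sum,
      Finset.sum_mul]
    simp

end frob

end MacLane

namespace MacLane
universe u v w
set_option autoImplicit false
open MvPolynomial

section factor
variable [HasExt.{1} Fn.{u}]

lemma factor_surj {R Q G : Fn.{u}} (q : R ⟶ Q) (hq : ∀ V, Function.Surjective (q.app V).hom)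
    (Θ : R ⟶ G) (h : ∀ V (x : R.obj V), (q.app V).hom x = 0 → (Θ.app V).hom x = 0) :
    ∃ Θ' : Q ⟶ G, q ≫ Θ' = Θ := by
  have H : ∀ V, ∃ s : Q.obj V →ₗ[ZMod 2] R.obj V, (q.app V).hom ∘ₗ s = LinearMap.id := fun V =>
    (q.app V).hom.exists_rightInverse_of_surjective (LinearMap.range_eq_top.2 (hq V))
  choose s hs using H
  have key : ∀ V x, (Θ.app V).hom (s V ((q.app V).hom x)) = (Θ.app V).hom x := by
    intro V x
    rw [← sub_eq_zero, ← map_sub]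
    apply h
    rw [map_sub, sub_eq_zero]
    exact LinearMap.congr_fun (hs V) _
  refine ⟨mkNat (fun V => (Θ.app V).hom ∘ₗ s V) (fun {V W} f y => ?_), nat_ext fun V x => key V x⟩
  obtain ⟨x, rfl⟩ := hq V y
  change (Θ.app W).hom (s W (act Q f ((q.app V).hom x))) = act G f ((Θ.app V).hom (s V ((q.app V).hom x)))
  rw [key, ← nat_act, key, nat_act]

lemma exists_image {R U : Fn.{u}} (ε : R ⟶ U) : ∃ (Q : Fn.{u}) (q : R ⟶ Q) (ι : Q ⟶ U), q ≫ ι = ε ∧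
    (∀ V, Function.Surjective (q.app V).hom) ∧ (∀ V, Function.Injective (ι.app V).hom) := by
  let Q : Fn.{u} := mkFun (fun V => LinearMap.range (ε.app V).hom)
    (fun {V W} f => (act U f).restrict (p := LinearMap.range (ε.app V).hom)
      (q := LinearMap.range (ε.app W).hom) (by
        rintro _ ⟨y, rfl⟩
        exact ⟨act R f y, nat_act ε f y⟩))
    (fun V => LinearMap.ext fun x => Subtype.ext (act_id U _))
    (fun f g => LinearMap.ext fun x => Subtype.ext (act_act U f g _).symm)
  refine ⟨Q, mkNat (fun V => (ε.app V).hom.rangeRestrict) (fun f x => Subtype.ext (nat_act ε f x)),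
    mkNat (fun V => (LinearMap.range (ε.app V).hom).subtype) (fun f x => rfl), nat_ext fun V x => rfl,
    fun V => LinearMap.surjective_rangeRestrict _, fun V => Subtype.val_injective⟩

lemma vanish_factor {F R U G : Fn.{u}} (i : ℕ) (φ : F ⟶ R) (ε : R ⟶ U) (Θ : R ⟶ G)
    (hker : ∀ V (x : R.obj V), (ε.app V).hom x = 0 → (Θ.app V).hom x = 0)
    (hU : Subsingleton (E U (i + 1)))
    (hs : ∀ V : FG.{u}, Module.finrank (ZMod 2) V ≤ 2 ^ i → Function.Surjective (ε.app V).hom)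
    (x : E F (i + 1)) : Em (φ ≫ Θ) (i + 1) x = 0 := by
  obtain ⟨Q, q, ι, e, hq, hι⟩ := exists_image ε
  obtain ⟨Θ', e'⟩ := factor_surj q hq Θ (fun V x hx => hker V x (by
    rw [← e]
    change (ι.app V).hom ((q.app V).hom x) = 0
    rw [hx, map_zero]))
  obtain ⟨C, g, w, hg, hex⟩ := exists_coker ι
  have hC : Subsingleton (E C i) := connectivity i C fun V hV => by
    refine subsingleton_of_forall_eq 0 fun c => ?_
    obtain ⟨y, rfl⟩ := hg V c
    obtain ⟨z, rfl⟩ := hs V hV y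
    rw [← e]
    exact congrArg (fun t : Q ⟶ C => (t.app V).hom ((q.app V).hom z)) w
  obtain ⟨δ, h1, h2, h3⟩ := les ι g w (shortExact_of _ _ w hι hg hex)
  have hQ : ∀ y : E Q (i + 1), y = 0 := by
    intro y
    obtain ⟨c, rfl⟩ := (h3 i y).1 (Subsingleton.elim _ _)
    rw [Subsingleton.elim c 0, map_zero]
  rw [← e', ← Category.assoc, Em_comp, hQ (Em (φ ≫ q) _ x), map_zero]

lemma Inj_vanish {α : Type u} (A : α → FG.{u}) (M : α → ModuleCat.{u} (ZMod 2)) (i : ℕ) :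
    Subsingleton (E (Inj A M) (i + 1)) :=
  subsingleton_of_forall_eq 0 fun x => Abelian.Ext.eq_zero_of_injective x

end factor

section lam
variable {κ : Type*} [CommRing κ] [Algebra (ZMod 2) κ] {σ : Type*}

/-- coefficientwise linear map -/
def lam (l : κ →ₗ[ZMod 2] ZMod 2) : MvPolynomial σ κ →+ MvPolynomial σ (ZMod 2) where
  toFun q := ∑ m ∈ q.support, monomial m (l (coeff m q))
  map_zero' := by simp
  map_add' a b := by
    classical
    have H : ∀ (q : MvPolynomial σ κ) (n), coeff n (∑ m ∈ q.support, monomial m (l (coeff m q))) = l (coeff n q) := by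
      intro q n
      rw [coeff_sum]
      simp only [coeff_monomial]
      rw [Finset.sum_ite_eq']
      split_ifs with h
      · rfl
      · rw [notMem_support_iff.1 h, map_zero]
    ext n
    rw [coeff_add, H, H, H, coeff_add, map_add]

lemma coeff_lam (l : κ →ₗ[ZMod 2] ZMod 2) (q : MvPolynomial σ κ) (n : σ →₀ ℕ) :
    coeff n (lam l q) = l (coeff n q) := by
  classical
  change coeff n (∑ m ∈ q.support, monomial m (l (coeff m q))) = l (coeff n q)
  rw [coeff_sum]
  simp only [coeff_monomial]
  rw [Finset.sum_ite_eq']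
  split_ifs with h
  · rfl
  · rw [notMem_support_iff.1 h, map_zero]

lemma lam_C_mul (l : κ →ₗ[ZMod 2] ZMod 2) (c : κ) (q : MvPolynomial σ (ZMod 2)) :
    lam l (C c * map (algebraMap (ZMod 2) κ) q) = C (l c) * q := by
  ext n
  rw [coeff_lam, coeff_C_mul, coeff_C_mul, coeff_map, mul_comm, ← Algebra.smul_def, map_smul,
    smul_eq_mul, mul_comm]

lemma lam_map (l : κ →ₗ[ZMod 2] ZMod 2) (hl : l 1 = 1) (q : MvPolynomial σ (ZMod 2)) :
    lam l (map (algebraMap (ZMod 2) κ) q) = q := by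
  have := lam_C_mul l 1 q
  rwa [hl, C_1, C_1, one_mul, one_mul] at this

lemma map_lin {J : Type*} {V : FG.{u}} (j : J) (v : V) :
    map (algebraMap (ZMod 2) κ) (lin (ZMod 2) j v) = lin κ j v := by
  have : ((map (algebraMap (ZMod 2) κ) : Pol (ZMod 2) J V →+* Pol κ J V) : Pol (ZMod 2) J V →+ Pol κ J V).toZModLinearMap 2
    ∘ₗ lin (ZMod 2) j = lin κ j := by
    refine (bas V).ext fun i => ?_
    change map (algebraMap (ZMod 2) κ) (lin (ZMod 2) j (bas V i)) = _
    rw [lin_bas, lin_bas, map_X]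
  exact LinearMap.congr_fun this v

lemma map_mapP {J : Type*} {V W : FG.{u}} (f : V →ₗ[ZMod 2] W) (p : Pol (ZMod 2) J V) :
    map (algebraMap (ZMod 2) κ) (mapP f p) = mapP f (map (algebraMap (ZMod 2) κ) p) := by
  induction p using MvPolynomial.induction_on with
  | C a => 
    rw [map_C]
    have h1 : mapP f (C a) = (C a : Pol (ZMod 2) J W) := (mapP f).commutes a
    have h2 : mapP f (C (algebraMap (ZMod 2) κ a)) = (C (algebraMap (ZMod 2) κ a) : Pol κ J W) := (mapP f).commutes _
    rw [h1, h2, map_C]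
  | add p q hp hq => simp only [map_add, hp, hq]
  | mul_X p i hp =>
    obtain ⟨j, i⟩ := i
    rw [map_mul, map_mul, map_mul, map_mul, hp, ← lin_bas (k := ZMod 2), mapP_lin, map_lin, map_lin, mapP_lin]

lemma lam_mapP (l : κ →ₗ[ZMod 2] ZMod 2) {J : Type*} {V W : FG.{u}} (f : V →ₗ[ZMod 2] W) (p : Pol κ J V) :
    lam l (mapP f p) = mapP f (lam l p) := by
  induction p using MvPolynomial.induction_on' with
  | add p q hp hq => rw [map_add, map_add, map_add, map_add, hp, hq]
  | monomial m c =>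
    have e : (monomial m c : Pol κ J V) = C c * map (algebraMap (ZMod 2) κ) (monomial m 1) := by
      rw [map_monomial, map_one, C_mul_monomial, mul_one]
    have h2 : mapP f (C c) = (C c : Pol κ J W) := (mapP f).commutes _
    have h1 : mapP f (C (l c)) = (C (l c) : Pol (ZMod 2) J W) := (mapP f).commutes _
    rw [e, map_mul, h2, ← map_mapP, lam_C_mul, lam_C_mul, map_mul, h1]

lemma mapP_totalDegree {J : Type*} {V W : FG.{u}} (f : V →ₗ[ZMod 2] W) (d : ℕ) (p : Pol κ J V)
    (hp : p.totalDegree ≤ d) : (mapP f p).totalDegree ≤ d := by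
  rw [← mem_filDeg_le]
  refine aeval_fil (filDeg κ (fun t n => n ≤ t) _) (filDeg_mono fun s t a h h' => h'.trans h)
    (filDeg_one le_rfl) (filDeg_mul fun s t a b => add_le_add) _ (fun i => ?_) d p hp
  intro m hm
  have := lin_weighted (k := κ) (fun _ : J => 1) i.1 (f (bas V i.2)) hm
  rw [← weight_one]
  exact this.le

lemma hc_mapP {V W : FG.{u}} (f : V →ₗ[ZMod 2] W) (N : ℕ) (p : Pol κ Unit V) :
    homogeneousComponent N (mapP f p) = mapP f (homogeneousComponent N p) := by
  have hom : ∀ j, (mapP f (homogeneousComponent j p) : Pol κ Unit W).IsHomogeneous j := fun j =>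
    liftP_weighted (k := κ) (w := wS) (w' := wS) (fun j => lin κ j ∘ₗ f)
      (fun j v => lin_weighted wS j (f v)) j _ (homogeneousComponent_isHomogeneous j p)
  conv_lhs => rw [← sum_homogeneousComponent p]
  rw [map_sum, map_sum]
  have : ∀ j, homogeneousComponent N (mapP f (homogeneousComponent j p) : Pol κ Unit W) =
      if N = j then mapP f (homogeneousComponent j p) else 0 := by
    intro j
    exact homogeneousComponent_of_mem (hom j)
  simp only [this]
  rw [Finset.sum_ite_eq]
  split_ifs with h
  · rfl
  · rw [homogeneousComponent_eq_zero, map_zero]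
    simpa using h
end lam

section lk
variable {κ : Type*} [Field κ] [CharP κ 2] [Algebra (ZMod 2) κ]

lemma Lk_lin {V : FG.{u}} (r k : ℕ) (v : V) :
    Lk κ (Unit × idx V) r k (lin κ () v) = ell _ r k (lin κ () v) := by
  have : ((Lk κ (Unit × idx V) r k : Pol κ Unit V →+ Pol κ Unit V).toZModLinearMap 2) ∘ₗ lin κ () =
    ((ell (Pol κ Unit V) r k).toZModLinearMap 2) ∘ₗ lin κ () := by
    refine (bas V).ext fun i => ?_
    change Lk κ (Unit × idx V) r k (lin κ () (bas V i)) = ell (Pol κ Unit V) r k (lin κ () (bas V i))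
    rw [lin_bas, Lk, aeval_X]
  exact LinearMap.congr_fun this v

lemma Lk_mapP {V W : FG.{u}} (f : V →ₗ[ZMod 2] W) (r k : ℕ) (p : Pol κ Unit V) :
    Lk κ (Unit × idx W) r k (mapP f p) = mapP f (Lk κ (Unit × idx V) r k p) := by
  have : (Lk κ (Unit × idx W) r k).comp (mapP f) = (mapP f).comp (Lk κ (Unit × idx V) r k) :=
    pol_hom_ext fun j v => by
      change Lk κ (Unit × idx W) r k (mapP f (lin κ () v)) = mapP f (Lk κ (Unit × idx V) r k (lin κ () v))
      rw [mapP_lin, Lk_lin, Lk_lin]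
      rw [ell_apply, ell_apply, map_sum]
      simp only [map_pow, mapP_lin]
  exact AlgHom.congr_fun this p
end lk

end MacLane

namespace MacLane
universe u v w
set_option autoImplicit false
open MvPolynomial

lemma expand_pow_zmod {σ : Type*} (n : ℕ) (p : MvPolynomial σ (ZMod 2)) :
    expand (2 ^ n) p = p ^ (2 ^ n) := by
  induction p using MvPolynomial.induction_on with
  | C a => rw [algHom_C, ← C_pow, ZMod.pow_card_pow]; rfl
  | add p q hp hq => rw [map_add, hp, hq, add_pow_char_pow]
  | mul_X p i hp => rw [map_mul, hp, expand_X, mul_pow]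

section R
variable (κ : Type u) [Field κ] [Fintype κ] [CharP κ 2] [Algebra (ZMod 2) κ]

/-- polynomials of bounded degree -/
abbrev rSub (d : ℕ) (V : FG.{u}) : Submodule (ZMod 2) (Pol κ Unit V) :=
  (filDeg κ (fun t n => n ≤ t) (Unit × idx V) d).restrictScalars (ZMod 2)

def mapR (d : ℕ) {V W : FG.{u}} (f : V →ₗ[ZMod 2] W) : rSub κ d V →ₗ[ZMod 2] rSub κ d W :=
  (((mapP f : Pol κ Unit V →ₐ[κ] Pol κ Unit W).toLinearMap).restrictScalars (ZMod 2)).restrict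
    (fun p hp => (mem_filDeg_le _ _).2 (mapP_totalDegree f d p ((mem_filDeg_le _ _).1 hp)))

def Rf (d : ℕ) : Fn.{u} :=
  mkFun (fun V => rSub κ d V) (fun f => mapR κ d f)
    (fun V => LinearMap.ext fun x => Subtype.ext (mapP_id _))
    (fun f g => LinearMap.ext fun x => Subtype.ext (mapP_mapP _ _ _).symm)

variable {κ}
def toR {d : ℕ} {V : FG.{u}} (x : (Rf κ d).obj V) : Pol κ Unit V := (show rSub κ d V from x).1

lemma toR_mem {d : ℕ} {V : FG.{u}} (x : (Rf κ d).obj V) : (toR x).totalDegree ≤ d :=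
  (mem_filDeg_le _ _).1 (show rSub κ d V from x).2

def ofR {d : ℕ} {V : FG.{u}} (p : Pol κ Unit V) (hp : p.totalDegree ≤ d) : (Rf κ d).obj V :=
  (⟨p, (mem_filDeg_le _ _).2 hp⟩ : rSub κ d V)

lemma toR_act {d : ℕ} {V W : FG.{u}} (f : V →ₗ[ZMod 2] W) (x : (Rf κ d).obj V) :
    toR (act (Rf κ d) f x) = mapP f (toR x) := rfl

variable (κ)
abbrev kF : FG.{u} := FGModuleCat.of (ZMod 2) κ

def Uf : Fn.{u} := Inj (fun _ : PUnit.{u+1} => kF κ) (fun _ => ModuleCat.of (ZMod 2) κ)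

def evK (d : ℕ) : (Rf κ d).obj (kF κ) →ₗ[ZMod 2] κ :=
  ((liftP (k := κ) (A := κ) (fun _ : Unit => (LinearMap.id : kF κ →ₗ[ZMod 2] κ))).toLinearMap.restrictScalars (ZMod 2)) ∘ₗ
    (rSub κ d (kF κ)).subtype

def epsR (d : ℕ) : Rf κ d ⟶ Uf κ := toInj (Rf κ d) (fun _ => evK κ d)

lemma epsR_app (d : ℕ) (V : FG.{u}) (x : (Rf κ d).obj V) (g : V →ₗ[ZMod 2] κ) :
    (((epsR κ d).app V).hom x : ∀ _ : PUnit.{u+1}, (V →ₗ[ZMod 2] kF κ) → κ) PUnit.unit g =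
      liftP (k := κ) (fun _ : Unit => g) (toR x) := by
  refine (toInj_app (M := fun _ : PUnit.{u+1} => ModuleCat.of (ZMod 2) κ)
    (Rf κ d) (fun _ => evK κ d) V x PUnit.unit g).trans ?_
  change liftP (k := κ) (A := κ) (fun _ : Unit => (LinearMap.id : kF κ →ₗ[ZMod 2] κ)) (mapP g (toR x)) = _
  have : (liftP (k := κ) (A := κ) (fun _ : Unit => (LinearMap.id : kF κ →ₗ[ZMod 2] κ))).comp
    (mapP (W := kF κ) g) = liftP (k := κ) (fun _ : Unit => g) := pol_hom_ext fun j v => by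
      rw [AlgHom.comp_apply, mapP_lin (W := kF κ), liftP_lin]
      exact (liftP_lin (k := κ) (fun _ : Unit => g) j v).symm
  exact AlgHom.congr_fun this _

lemma liftP_constr (V : FG.{u}) (y : Unit × idx V → κ) (p : Pol κ Unit V) :
    liftP (k := κ) (fun _ : Unit => (bas V).constr (ZMod 2) (fun i => y ((), i))) p = eval y p := by
  have : liftP (k := κ) (fun _ : Unit => (bas V).constr (ZMod 2) (fun i => y ((), i))) = aeval y := by
    refine MvPolynomial.algHom_ext fun q => ?_
    rw [liftP_X, aeval_X, Module.Basis.constr_basis]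
  rw [this]
  exact RingHom.congr_fun (coe_aeval_eq_eval y) p

lemma epsR_surj (d i : ℕ) (hd : 2 ^ i * (Fintype.card κ - 1) ≤ d) (V : FG.{u})
    (hV : Module.finrank (ZMod 2) V ≤ 2 ^ i) : Function.Surjective ((epsR κ d).app V).hom := by
  intro φ
  let φ' : (V →ₗ[ZMod 2] κ) → κ := (φ : ∀ _ : PUnit.{u+1}, (V →ₗ[ZMod 2] kF κ) → κ) PUnit.unit
  let ψ : (Unit × idx V → κ) → κ := fun y => φ' ((bas V).constr (ZMod 2) (fun i => y ((), i)))
  have h : ψ ∈ (restrictDegree (Unit × idx V) κ (Fintype.card κ - 1)).map (evalₗ κ _) := by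
    rw [map_restrict_dom_evalₗ]; trivial
  obtain ⟨p, hp, e⟩ := h
  have hp' : p.totalDegree ≤ d := by
    refine le_trans ?_ hd
    refine Finset.sup_le fun m hm => ?_
    have h1 : ∀ i, m i ≤ Fintype.card κ - 1 := fun i => (mem_restrictDegree _ _ _).1 hp m hm i
    rw [Finsupp.sum_fintype _ _ (by simp)]
    refine (Finset.sum_le_card_nsmul _ _ _ (fun i _ => h1 i)).trans ?_
    rw [smul_eq_mul]
    refine Nat.mul_le_mul_right _ ?_
    rw [Finset.card_univ, Fintype.card_prod, Fintype.card_unit, one_mul,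
      ← Module.finrank_eq_card_basis (bas V)]
    exact hV
  refine ⟨ofR p hp', ?_⟩
  funext a (g : V →ₗ[ZMod 2] κ)
  refine (epsR_app κ d V _ g).trans ?_
  have hg : g = (bas V).constr (ZMod 2) (fun i => g (bas V i)) := by
    refine (bas V).ext fun i => ?_
    rw [Module.Basis.constr_basis]
  have h2 := congrFun e (fun q => g (bas V q.2))
  rw [hg]
  refine (liftP_constr κ V (fun q => g (bas V q.2)) p).trans ?_
  exact h2

lemma epsR_ker (d : ℕ) (V : FG.{u}) (x : (Rf κ d).obj V) (hx : ((epsR κ d).app V).hom x = 0)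
    (y : Unit × idx V → κ) : eval y (toR x) = 0 := by
  rw [← liftP_constr, ← epsR_app, hx]
  rfl

def thR (l : κ →ₗ[ZMod 2] ZMod 2) (r k d N : ℕ) : Rf κ d ⟶ S.{u} N :=
  mkNat (fun V =>
    ((((lam l).comp ((homogeneousComponent N).toAddMonoidHom.comp
      (Lk κ (Unit × idx V) r k : Pol κ Unit V →+ Pol κ Unit V))).toZModLinearMap 2).restrict
      (p := rSub κ d V) (q := polSub wS N V) (fun p _ m hm => by
        have h1 : coeff m (homogeneousComponent N (Lk κ (Unit × idx V) r k p)) ≠ 0 := fun h => hm (by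
          refine (coeff_lam l _ m).trans ?_
          erw [h, map_zero])
        exact homogeneousComponent_isHomogeneous N _ h1)))
    (fun {V W} f x => toPol_inj (by
      change lam l (homogeneousComponent N (Lk κ (Unit × idx W) r k (mapP f (toR x)))) =
        mapP f (lam l (homogeneousComponent N (Lk κ (Unit × idx V) r k (toR x))))
      rw [Lk_mapP, hc_mapP, lam_mapP]))

lemma thR_app (l : κ →ₗ[ZMod 2] ZMod 2) (r k d N : ℕ) (V : FG.{u}) (x : (Rf κ d).obj V) :
    toPol (((thR κ l r k d N).app V).hom x) =
      lam l (homogeneousComponent N (Lk κ (Unit × idx V) r k (toR x))) := rfl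

def inR (m d : ℕ) (h : m ≤ d) : S.{u} m ⟶ Rf κ d :=
  mkNat (fun V => (((map (algebraMap (ZMod 2) κ) : Pol (ZMod 2) Unit V →+* Pol κ Unit V) :
     Pol (ZMod 2) Unit V →+ Pol κ Unit V).toZModLinearMap 2).restrict
      (p := polSub wS m V) (q := rSub κ d V) (fun p hp n hn => by
        have h1 : coeff n p ≠ 0 := fun h0 => hn (by
          refine (coeff_map _ _ _).trans ?_
          rw [h0, map_zero])
        have h2 := hp h1
        rw [← weight_one]
        exact h2.le.trans h))
    (fun {V W} f x => Subtype.ext (map_mapP f (toPol x)))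

lemma inR_app (m d : ℕ) (h : m ≤ d) (V : FG.{u}) (x : (S m).obj V) :
    toR (((inR κ m d h).app V).hom x) = map (algebraMap (ZMod 2) κ) (toPol x) := rfl

lemma inR_thR (l : κ →ₗ[ZMod 2] ZMod 2) (hl : l 1 = 1) (r k m d N : ℕ) (hr : 0 < r) (h : m ≤ d)
    (hN : N = m * 2 ^ (r * k)) : inR κ m d h ≫ thR κ l r k d N = Frob m N (r * k) hN := by
  refine nat_ext fun V x => toPol_inj ?_
  refine (thR_app κ l r k d N V (((inR κ m d h).app V).hom x)).trans ?_
  rw [Frob_app, inR_app, hN, Lk_top r k m hr, ← map_expand, lam_map l hl]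
  · exact expand_pow_zmod _ _
  · exact (show (toPol x).IsHomogeneous m from toPol_mem x).map _

end R

variable [HasExt.{1} Fn.{u}]

/-- Frobenius is eventually zero in positive degrees. -/
lemma frob_vanish (h i : ℕ) : ∃ j, ∀ (N : ℕ) (hN : N = 2 ^ h * 2 ^ j) (x : E (S.{u} (2 ^ h)) (i + 1)),
    Em (Frob (2 ^ h) N j hN) (i + 1) x = 0 := by
  let r := h + 1
  let κ := ULift.{u} (GaloisField 2 r)
  have : Fintype κ := Fintype.ofFinite κ
  have hcard : Fintype.card κ = 2 ^ r := by
    rw [Fintype.card_eq_nat_card, Nat.card_ulift, GaloisField.card 2 r (by omega)]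
  have : CharP κ 2 := charP_of_injective_algebraMap (algebraMap (ZMod 2) κ).injective 2
  obtain ⟨l, hl⟩ : ∃ l : κ →ₗ[ZMod 2] ZMod 2, l 1 = 1 := by
    obtain ⟨l, hl⟩ := (Algebra.linearMap (ZMod 2) κ).exists_leftInverse_of_injective
      (LinearMap.ker_eq_bot.2 (algebraMap (ZMod 2) κ).injective)
    refine ⟨l, ?_⟩
    have := LinearMap.congr_fun hl 1
    simpa using this
  let d := max (2 ^ i * (Fintype.card κ - 1)) (2 ^ h)
  let k := d + 1
  refine ⟨r * k, fun N hN x => ?_⟩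
  have hN' : N = 2 ^ (h + r * k) := by rw [hN, pow_add]
  rw [← inR_thR κ l hl r k (2 ^ h) d N (by omega) (le_max_right _ _) hN]
  refine vanish_factor i _ (epsR κ d) _ (fun V y hy => toPol_inj ?_) (Inj_vanish _ _ i)
    (epsR_surj κ d i (le_max_left _ _)) x
  rw [thR_app, Lk_rel r k d N hcard (by rw [hN']; positivity) ?_ ?_ _ (toR_mem y) (epsR_ker κ d V y hy)]
  · exact map_zero _
  · rw [hN']
    refine Nat.pow_lt_pow_right (by norm_num) ?_
    have e1 : r * (k + 1) = r * k + r := by ring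
    have e2 : r = h + 1 := rfl
    rw [e1]
    generalize r * k = z at *
    omega
  · rw [hN', pc_pred]
    have : 1 * k ≤ r * k := Nat.mul_le_mul_right k (by omega)
    omega

end MacLane

namespace MacLane
universe u v w
set_option autoImplicit false
open MvPolynomial

/-- The identification of the identity functor with the first symmetric power. -/
def linNat : (inclFunctor : Fn.{u}) ⟶ S.{u} 1 :=
  mkNat (fun V => (LinearMap.codRestrict (polSub wS 1 V) (lin (ZMod 2) () : V →ₗ[ZMod 2] _)
      (fun v => lin_weighted wS () v) : V →ₗ[ZMod 2] polSub wS 1 V))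
    (fun {V W} f x => toPol_inj (mapP_lin (k := ZMod 2) (J := Unit) f () x).symm)

lemma linNat_app (V : FG.{u}) (v : V) : toPol ((linNat.app V).hom v) = lin (ZMod 2) () v := rfl

lemma linNat_inj (V : FG.{u}) : Function.Injective (linNat.app V).hom := by
  intro (v : V) (v' : V) h
  have h' : (lin (ZMod 2) () v : Pol (ZMod 2) Unit V) = lin (ZMod 2) () v' := congrArg toPol h
  refine (bas V).ext_elem fun i => ?_
  have := congrArg (liftP (k := ZMod 2) (A := ZMod 2) (fun _ : Unit => (bas V).coord i)) h'
  rwa [liftP_lin, liftP_lin] at this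

lemma linNat_surj (V : FG.{u}) : Function.Surjective (linNat.app V).hom := by
  intro p
  have hp : toPol p ∈ homogeneousSubmodule (Unit × idx V) (ZMod 2) 1 := toPol_mem p
  rw [homogeneousSubmodule_one_eq_span_X] at hp
  have : Submodule.span (ZMod 2) (Set.range (X : Unit × idx V → MvPolynomial (Unit × idx V) (ZMod 2))) ≤
      LinearMap.range (lin (ZMod 2) () : V →ₗ[ZMod 2] Pol (ZMod 2) Unit V) := by
    rw [Submodule.span_le]
    rintro _ ⟨⟨⟨⟩, i⟩, rfl⟩
    exact ⟨bas V i, lin_bas _ _⟩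
  obtain ⟨v, hv⟩ := this hp
  exact ⟨v, toPol_inj hv⟩

def linIso : (inclFunctor : Fn.{u}) ≅ S.{u} 1 :=
  have := mono_of_inj linNat linNat_inj
  have := epi_of_surj linNat linNat_surj
  have : IsIso (linNat.{u}) := isIso_of_mono_of_epi _
  asIso linNat

lemma equiv_zmod {G : Type*} [AddCommGroup G] (a : G) (ha : a ≠ 0) (h : ∀ x : G, x = 0 ∨ x = a) :
    Nonempty (G ≃+ ZMod 2) := by
  have hc : Nat.card G = 2 := by
    rw [Nat.card_eq_two_iff]
    refine ⟨0, a, ha.symm, ?_⟩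
    ext x
    simpa using h x
  have : Fact (Nat.Prime 2) := ⟨Nat.prime_two⟩
  have : IsAddCyclic G := isAddCyclic_of_prime_card hc
  have e := zmodAddCyclicAddEquiv (G := G) this
  rw [hc] at e
  exact ⟨e.symm⟩

abbrev V1 : FG.{u} := FGModuleCat.of (ZMod 2) (ULift.{u} (ZMod 2))

lemma hom_incl (φ : (inclFunctor : Fn.{u}) ⟶ inclFunctor) : φ = 0 ∨ φ = 𝟙 _ := by
  have key : ∀ (V : FG.{u}) (v : V), ∃ f : V1.{u} →ₗ[ZMod 2] V, f (ULift.up 1) = v := fun V v =>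
    ⟨(LinearMap.toSpanSingleton (ZMod 2) V v) ∘ₗ (ULift.moduleEquiv : ULift.{u} (ZMod 2) ≃ₗ[ZMod 2] ZMod 2).toLinearMap, by
      change (1 : ZMod 2) • v = v
      exact one_smul _ v⟩
  obtain ⟨c, hc⟩ : ∃ c : ULift.{u} (ZMod 2), c = (φ.app V1).hom (ULift.up 1 : ULift.{u} (ZMod 2)) := ⟨_, rfl⟩
  have hφ : ∀ (V : FG.{u}) (f : V1.{u} →ₗ[ZMod 2] V),
      (φ.app V).hom (f (ULift.up 1)) = f c := fun V f => by
    have := nat_act φ f (ULift.up 1 : ULift.{u} (ZMod 2))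
    refine this.trans ?_
    rw [hc]; rfl
  obtain ⟨c⟩ := c
  have : c = 0 ∨ c = 1 := (show ∀ c : ZMod 2, c = 0 ∨ c = 1 by decide) c
  rcases this with rfl | rfl
  · left
    refine nat_ext fun V v => ?_
    obtain ⟨f, rfl⟩ := key V v
    refine (hφ V f).trans ?_
    exact map_zero f
  · right
    refine nat_ext fun V v => ?_
    obtain ⟨f, rfl⟩ := key V v
    exact hφ V f

lemma id_incl_ne : (𝟙 (inclFunctor : Fn.{u})) ≠ 0 := fun h => by
  have := congrArg (fun ψ => (ψ.app V1).hom (ULift.up 1 : ULift.{u} (ZMod 2))) h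
  have h2 : (ULift.up 1 : ULift.{u} (ZMod 2)) = 0 := this
  exact one_ne_zero (congrArg ULift.down h2)

section
variable [HasExt.{1} Fn.{u}]

lemma E_incl_zero : Nonempty (E (inclFunctor : Fn.{u}) 0 ≃+ ZMod 2) := by
  obtain ⟨e⟩ := equiv_zmod (𝟙 (inclFunctor : Fn.{u})) id_incl_ne hom_incl
  exact ⟨Abelian.Ext.addEquiv₀.trans e⟩

/-- The data of the main exact sequence for `m = 2 ^ h`. -/
lemma ses (h : ℕ) : ∃ (C : Fn.{u}) (g : S.{u} (2 ^ (h + 1)) ⟶ C)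
    (δ : ∀ n, E C n →+ E (S.{u} (2 ^ h)) (n + 1)),
    (∀ n, Function.Exact (Em (Frob (2 ^ h) (2 ^ (h + 1)) 1 (pow_add 2 h 1)) n) (Em g n)) ∧
    (∀ n, Function.Exact (Em g n) (δ n)) ∧
    (∀ n, Function.Exact (δ n) (Em (Frob (2 ^ h) (2 ^ (h + 1)) 1 (pow_add 2 h 1)) (n + 1))) ∧
    (∀ i < 2 ^ (h + 1) - 1, Subsingleton (E C i)) ∧
      ∀ i, Nonempty (E (S.{u} (2 ^ (h + 1))) i ≃+ E C (i + (2 ^ (h + 1) - 1))) := by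
  obtain ⟨C, g, w, hS, h1, h2⟩ := main_ses.{u} (2 ^ h) (2 ^ (h + 1)) (pow_add 2 h 1) (by positivity)
  obtain ⟨δ, a, b, c⟩ := les _ _ w hS
  exact ⟨C, g, δ, a, b, c, h1, h2⟩

lemma exact_inj {A B C : Type*} [AddCommGroup A] [AddCommGroup B] [AddCommGroup C]
    (f : A →+ B) (g : B →+ C) (h : Function.Exact f g) [Subsingleton A] : Function.Injective g := by
  rw [injective_iff_map_eq_zero]
  intro b hb
  obtain ⟨a, rfl⟩ := (h b).1 hb
  rw [Subsingleton.elim a 0, map_zero]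

lemma exact_surj {A B C : Type*} [AddCommGroup A] [AddCommGroup B] [AddCommGroup C]
    (f : A →+ B) (g : B →+ C) (h : Function.Exact f g) [Subsingleton C] : Function.Surjective f :=
  fun b => (h b).1 (Subsingleton.elim _ _)

lemma frob_inj_E (h i : ℕ) (hi : i < 2 ^ (h + 1)) :
    Function.Injective (Em (Frob.{u} (2 ^ h) (2 ^ (h + 1)) 1 (pow_add 2 h 1)) i) := by
  obtain ⟨C, g, δ, a, b, c, h1, h2⟩ := ses.{u} h
  cases i with
  | zero =>
    have := mono_of_inj _ (Frob_inj.{u} (2 ^ h) (2 ^ (h + 1)) 1 (pow_add 2 h 1))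
    exact inj_zero _
  | succ i =>
    have := h1 i (by omega)
    exact exact_inj _ _ (c i)

lemma frob_inj_iter (h i : ℕ) (hi : i < 2 ^ (h + 1)) (j : ℕ) :
    Function.Injective (Em (Frob.{u} (2 ^ h) (2 ^ (h + j)) j (pow_add 2 h j)) i) := by
  induction j with
  | zero =>
    have : Frob.{u} (2 ^ h) (2 ^ (h + 0)) 0 (pow_add 2 h 0) = 𝟙 _ := nat_ext fun V x => toPol_inj (by
      change toPol x ^ 2 ^ 0 = toPol x
      simp)
    rw [this]
    intro x y hxy
    exact (Em_id i x).symm.trans (hxy.trans (Em_id i y))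
  | succ j ih =>
    have hc := Frob_comp.{u} (2 ^ h) (2 ^ (h + j)) (2 ^ (h + (j + 1))) j 1 (pow_add 2 h j)
      (pow_add 2 (h + j) 1) (pow_add 2 h (j + 1))
    intro x y hxy
    rw [← hc, Em_comp, Em_comp] at hxy
    refine ih (frob_inj_E (h + j) i (hi.trans_le ?_) hxy)
    exact Nat.pow_le_pow_right (by norm_num) (by omega)

lemma low_vanish (h i : ℕ) (hi : i + 1 < 2 ^ (h + 1)) : Subsingleton (E (S.{u} (2 ^ h)) (i + 1)) := by
  obtain ⟨j, hj⟩ := frob_vanish.{u} h i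
  have := frob_inj_iter.{u} h (i + 1) hi j
  refine ⟨fun x y => this ?_⟩
  rw [hj _ _ x, hj _ _ y]

lemma two_le_pow (h : ℕ) : 2 ≤ 2 ^ (h + 1) := by
  calc 2 = 2 ^ 1 := rfl
    _ ≤ _ := Nat.pow_le_pow_right (by norm_num) (by omega)

lemma deg_zero (h : ℕ) : Nonempty (E (S.{u} (2 ^ h)) 0 ≃+ ZMod 2) := by
  induction h with
  | zero =>
    obtain ⟨e⟩ := E_incl_zero.{u}
    exact ⟨(Eiso linIso 0).symm.trans e⟩
  | succ h ih =>
    obtain ⟨e⟩ := ih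
    obtain ⟨C, g, δ, a, b, c, h1, h2⟩ := ses.{u} h
    have := h1 0 (by have := two_le_pow h; omega)
    exact ⟨(AddEquiv.ofBijective _ ⟨frob_inj_E h 0 (by positivity), exact_surj _ _ (a 0)⟩).symm.trans e⟩

/-- The expected value. -/
def Dv (h i : ℕ) : Prop :=
  (i % 2 ^ (h + 1) = 0 → Nonempty (E (S.{u} (2 ^ h)) i ≃+ ZMod 2)) ∧
    (i % 2 ^ (h + 1) ≠ 0 → Subsingleton (E (S.{u} (2 ^ h)) i))

lemma Dv_low (h i : ℕ) (hi : i < 2 ^ (h + 1)) : Dv.{u} h i := by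
  unfold Dv
  rw [Nat.mod_eq_of_lt hi]
  refine ⟨?_, ?_⟩
  · rintro rfl
    exact deg_zero h
  · intro h0
    obtain ⟨i, rfl⟩ := Nat.exists_eq_succ_of_ne_zero h0
    exact low_vanish h i hi

lemma Dv_step (h N : ℕ) (ih : ∀ i ≤ N, Dv.{u} (h + 1) i) : ∀ i ≤ N, Dv.{u} h i := by
  intro i hi
  obtain ⟨C, g, δ, a, b, c, h1, h2⟩ := ses.{u} h
  have hn := two_le_pow h
  obtain ⟨n, hn'⟩ : ∃ n, n = 2 ^ (h + 1) := ⟨_, rfl⟩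
  have h2n : 2 ^ (h + 1 + 1) = 2 * n := by rw [hn', pow_succ, mul_comm]
  unfold Dv at ih ⊢
  rw [h2n] at ih
  rw [← hn'] at h1 h2 hn ⊢
  have hC : ∀ j ≤ N, ((j + 1) % (2 * n) = n → Nonempty (E C j ≃+ ZMod 2)) ∧
      ((j + 1) % (2 * n) ≠ n → Subsingleton (E C j)) := by
    intro j hj
    by_cases hjn : j < n - 1
    · refine ⟨fun hh => ?_, fun _ => h1 j hjn⟩
      rw [Nat.mod_eq_of_lt (by omega)] at hh
      omega
    · obtain ⟨q, rfl⟩ : ∃ q, j = q + (n - 1) := ⟨j - (n - 1), by omega⟩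
      obtain ⟨e⟩ := h2 q
      have hq : q + (n - 1) + 1 = q + n := by omega
      rw [hq]
      have hmod : (q + n) % (2 * n) = n ↔ q % (2 * n) = 0 := by
        have e1 : (q + n) % (2 * n) = (q % (2 * n) + n) % (2 * n) := by simp
        rw [e1]
        have hlt : q % (2 * n) < 2 * n := Nat.mod_lt _ (by omega)
        generalize q % (2 * n) = r at *
        by_cases hr : r < n
        · rw [Nat.mod_eq_of_lt (by omega)]; omega
        · rw [Nat.mod_eq_sub_mod (by omega), Nat.mod_eq_of_lt (by omega)]; omega
      obtain ⟨d1, d2⟩ := ih q (by omega)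
      rw [← hn'] at d1 d2
      refine ⟨fun hh => ?_, fun hh => ?_⟩
      · obtain ⟨e'⟩ := d1 (hmod.1 hh)
        exact ⟨e.symm.trans e'⟩
      · have := d2 (fun h0 => hh (hmod.2 h0))
        exact e.symm.toEquiv.subsingleton
  cases i with
  | zero =>
    refine ⟨fun _ => deg_zero h, fun hh => absurd (Nat.zero_mod _) hh⟩
  | succ t =>
    have hlt : (t + 1) % (2 * n) < 2 * n := Nat.mod_lt _ (by omega)
    have hmm : (t + 1) % (2 * n) % n = (t + 1) % n := Nat.mod_mod_of_dvd _ (Dvd.intro_left 2 rfl)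
    by_cases c0 : (t + 1) % (2 * n) = 0
    · have s1 := (hC t (by omega)).2 (by omega)
      have s2 := (hC (t + 1) (by omega)).2 (by
        rw [Nat.add_mod, c0, zero_add, Nat.mod_mod, Nat.mod_eq_of_lt (by omega)]
        omega)
      obtain ⟨e⟩ := (ih (t + 1) hi).1 c0
      refine ⟨fun _ => ⟨(AddEquiv.ofBijective _ ⟨exact_inj _ _ (c t), exact_surj _ _ (a (t + 1))⟩).trans e⟩,
        fun hh => ?_⟩
      rw [c0] at hmm
      simp at hmm
      omega
    · by_cases c1 : (t + 1) % (2 * n) = n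
      · have s1 := (ih (t + 1) hi).2 c0
        have s2 := (ih t (by omega)).2 (fun h0 => by
          rw [Nat.add_mod, h0, zero_add, Nat.mod_mod, Nat.mod_eq_of_lt (by omega)] at c1
          omega)
        obtain ⟨e⟩ := (hC t (by omega)).1 c1
        refine ⟨fun _ => ⟨(AddEquiv.ofBijective (δ t) ⟨exact_inj _ _ (b t), exact_surj _ _ (c t)⟩).symm.trans e⟩,
          fun hh => ?_⟩
        rw [c1, Nat.mod_self] at hmm
        omega
      · have s1 := (ih (t + 1) hi).2 c0
        have s2 := (hC t (by omega)).2 c1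
        refine ⟨fun hh => ?_, fun _ => (exact_inj _ _ (c t)).subsingleton⟩
        exfalso
        generalize (t + 1) % (2 * n) = r at *
        by_cases hr : r < n
        · rw [Nat.mod_eq_of_lt hr] at hmm; omega
        · rw [Nat.mod_eq_sub_mod (by omega), Nat.mod_eq_of_lt (by omega)] at hmm; omega

lemma Dv_all (N d : ℕ) : ∀ h, N ≤ h + d → ∀ i ≤ N, Dv.{u} h i := by
  induction d with
  | zero =>
    intro h hh i hi
    refine Dv_low h i ?_
    have := Nat.lt_two_pow_self (n := h + 1)
    omega
  | succ d ih =>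
    intro h hh
    exact Dv_step h N (ih (h + 1) (by omega))

theorem final (k : ℕ) : (Even k → Nonempty (E (inclFunctor : Fn.{u}) k ≃+ ZMod 2)) ∧
    (¬ Even k → Subsingleton (E (inclFunctor : Fn.{u}) k)) := by
  obtain ⟨h1, h2⟩ := Dv_all.{u} k k 0 (by omega) k le_rfl
  have e : E (inclFunctor : Fn.{u}) k ≃+ E (S.{u} (2 ^ 0)) k := Eiso linIso k
  simp only [zero_add, pow_one] at h1 h2
  rw [Nat.even_iff]
  refine ⟨fun hk => ?_, fun hk => ?_⟩
  · obtain ⟨e'⟩ := h1 hk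
    exact ⟨e.trans e'⟩
  · have := h2 hk
    exact e.toEquiv.subsingleton

end

end MacLane

open CategoryTheory.Abelian in
/-- The Mac Lane cohomology of `𝔽₂` with coefficients in the identity
functor, `HML^k(𝔽₂; I) = Ext^k_{F(𝔽₂)}(I, I)`, is `𝔽₂` for all even `k ≥ 0` and vanishes
for all odd `k`. -/
theorem stmt18 [CategoryTheory.HasExt.{1} FunCatF2] (k : ℕ) :
    (Even k → Nonempty (Ext inclFunctor inclFunctor k ≃+ ZMod 2)) ∧
    (¬ Even k → Subsingleton (Ext inclFunctor inclFunctor k)) := by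
  exact MacLane.final k

end
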